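/- arXiv:1410.7727 — 2 statements merged into one kernel-verified Lean document; each statement's English description precedes it below -/
import Mathlib

section
/- For every w ∈ Max and every α ∈ Δ', one has α ∈ DF(w) if and only if I(α) ≤ w in the lexicographic order. -/
open Filter Topology MeasureTheory

/-- The sequence space `Σ⁺ = {0,1,2}^ℕ` (with the product topology). -/
abbrev Seq3 := ℕ → Fin 3

/-- The shift map `σ`. -/
def shift (s : Seq3) : Seq3 := fun n => s (n + 1)

/-- The observable `κ(s) = e_{s₀}`. -/
noncomputable def kappa (s : Seq3) : Fin 3 → ℝ := fun i => if i = s 0 then 1 else 0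

/-- The cocycle `κ_σ(s,r) = Σ_{i<r} κ(σⁱ s)`. -/
noncomputable def birk (s : Seq3) (r : ℕ) : Fin 3 → ℝ :=
  ∑ i ∈ Finset.range r, kappa (shift^[i] s)

/-- The Birkhoff digit frequency of `s` exists and equals `v`. -/
def hasFreq (s : Seq3) (v : Fin 3 → ℝ) : Prop :=
  Tendsto (fun r : ℕ => (r : ℝ)⁻¹ • birk s r) atTop (nhds v)

/-- The lexicographic order on `Σ⁺`. -/
def lexLe (s t : Seq3) : Prop :=
  s = t ∨ ∃ n, (∀ i, i < n → s i = t i) ∧ s n < t n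

/-- The set `Max` of maximal sequences. -/
def MaxSet : Set Seq3 := {w | w 0 = 2 ∧ ∀ r : ℕ, lexLe (shift^[r] w) w}

/-- The symbolic β-shift `B(w)`. -/
def BetaShift (w : Seq3) : Set Seq3 := {s | ∀ r : ℕ, lexLe (shift^[r] s) w}

/-- The digit frequency set `DF(w)`. -/
def DF (w : Seq3) : Set (Fin 3 → ℝ) := {v | ∃ s ∈ BetaShift w, hasFreq s v}

/-- The Misiurewicz–Ziemian digit frequency set `DF_MZ(X)` of a subset `X ⊆ Σ⁺`. -/
def DFMZ (X : Set Seq3) : Set (Fin 3 → ℝ) :=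
  {v | ∃ (s : ℕ → Seq3) (r : ℕ → ℕ), (∀ i, s i ∈ X) ∧ Tendsto r atTop atTop ∧
    Tendsto (fun i => (r i : ℝ)⁻¹ • birk (s i) (r i)) atTop (nhds v)}

/-- The standard 2-simplex `Δ ⊆ ℝ³`. -/
def Delta : Set (Fin 3 → ℝ) := {α | (∀ i, 0 ≤ α i) ∧ α 0 + α 1 + α 2 = 1}

/-- `Δ' = {α ∈ Δ : α₂ > 0}`. -/
def Delta' : Set (Fin 3 → ℝ) := {α | α ∈ Delta ∧ 0 < α 2}

/-- `I` is the infimax sequence of `α`: the infimum, in the lexicographic order, of the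
(nonempty) set of maximal sequences with digit frequency `α`; it belongs to `Max`. -/
def IsInfimax (α : Fin 3 → ℝ) (I : Seq3) : Prop :=
  {w | w ∈ MaxSet ∧ hasFreq w α}.Nonempty ∧ I ∈ MaxSet ∧
    (∀ w, w ∈ MaxSet ∧ hasFreq w α → lexLe I w) ∧
    (∀ b : Seq3, (∀ w, w ∈ MaxSet ∧ hasFreq w α → lexLe b w) → lexLe b I)

/-- The closure of the forward `σ`-orbit of `s` (e.g. `C_α` is `orbitClosure I(α)`). -/
def orbitClosure (s : Seq3) : Set Seq3 := closure {t | ∃ r : ℕ, shift^[r] s = t}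

/-- A vector in `ℝ³` is rational if all its coordinates are. -/
def IsRat (v : Fin 3 → ℝ) : Prop := ∀ i, ∃ q : ℚ, v i = (q : ℝ)

/-- A minimal set of a continuous map: a nonempty compact invariant set in which every
point has dense forward orbit. -/
def IsMinimalSet {X : Type*} [TopologicalSpace X] (f : X → X) (C : Set X) : Prop :=
  C.Nonempty ∧ IsCompact C ∧ Set.MapsTo f C C ∧
    ∀ x ∈ C, C ⊆ closure {y | ∃ n : ℕ, f^[n] x = y}

/-!
If `I(α) ≤ w`, then `I(α)` agrees on arbitrarily long initial words with some `v ∈ Max` of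
frequency `α`. Cut `v` into blocks of that length and lower the last nonzero letter of each block
to `0`: every suffix of the resulting word is strictly below `I(α)`, and only a small proportion
of letters has changed. Concatenating such words for better and better `v`, with the word length
growing slowly, gives an element of `B(I(α)) ⊆ B(w)` whose frequency is exactly `α`.

Conversely, if `x ∈ Max` ends in zeros and all shifts of `t` are strictly below `x`, then
following `x` for a long time and switching to `t` gives an element of `Max` as close to `x` as we
like, with the frequency of `t`. Hence `I(α) ≤ x` whenever such a `t` has frequency `α`. Now let
`s ∈ B(w)` have frequency `α`.

* If `w` has unbordered initial words of unbounded length, increase the last letter of one of them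
  and continue by zeros. This is an `x ∈ Max` above `w`, arbitrarily close to `w`, and `t = s`
  works.
* Otherwise `w` is periodic, with an unbordered period word `p`. If `p` has frequency `α`, so does
  `w`. If not, `s` splits greedily into copies of `p` and words, no longer than `p`, that end at a
  first difference with `w`. The latter make up a positive proportion, since only they can correct
  the frequency of `p`. Redistributing the copies of `p` evenly among them bounds the number `n`
  of consecutive copies and gives `t` for the truncation `x = pⁿ⁺¹000…` of `w`.
-/

theorem length_flatten_le_mul {A : Type*} {k : ℕ} {us : List (List A)}
    (h : ∀ u ∈ us, u.length ≤ k) : us.flatten.length ≤ us.length * k := by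
  simpa using List.sum_le_card_nsmul (us.map List.length) k (by simpa using h)

section WordOrder

variable {A : Type*} [LinearOrder A] {u u' v v' : List A}

theorem append_lt_append_iff_of_length_eq (h : u.length = u'.length) :
    u ++ v < u' ++ v' ↔ u < u' ∨ u = u' ∧ v < v' := by
  induction u generalizing u' with
  | nil =>
    obtain rfl : u' = [] := List.length_eq_zero_iff.mp h.symm
    simp
  | cons a u ih =>
    obtain _ | ⟨b, u'⟩ := u'
    · simp at h
    · simp only [List.cons_append, List.cons_lt_cons_iff, List.cons.injEq, ih (Nat.succ.inj h)]
      tauto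

theorem append_le_append_iff_of_length_eq (h : u.length = u'.length) :
    u ++ v ≤ u' ++ v' ↔ u < u' ∨ u = u' ∧ v ≤ v' := by
  rw [← not_lt, append_lt_append_iff_of_length_eq h.symm]
  rcases lt_trichotomy u u' with hlt | rfl | hgt
  · simp [hlt, hlt.not_gt, hlt.ne']
  · simp
  · simp [hgt, hgt.not_gt, hgt.ne']

end WordOrder

/-- The word `s₀ s₁ … sₙ₋₁`. -/
def initWord (s : Seq3) (n : ℕ) : List (Fin 3) := (List.range n).map s

/-- The strict lexicographic order on `Σ⁺`, read off from initial words of a common length. -/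
def lexLt (s t : Seq3) : Prop := ∃ n, initWord s n < initWord t n

theorem shift_iterate_apply (r n : ℕ) (s : Seq3) : shift^[r] s n = s (r + n) := by
  induction r generalizing s with
  | zero => simp
  | succ r ih => rw [Function.iterate_succ_apply, ih, shift, Nat.add_right_comm]

section InitWord

variable {s t : Seq3} {m n : ℕ}

@[simp] theorem length_initWord (s : Seq3) (n : ℕ) : (initWord s n).length = n := by
  simp [initWord]

@[simp] theorem initWord_zero (s : Seq3) : initWord s 0 = [] := rfl

theorem initWord_succ (s : Seq3) (n : ℕ) : initWord s (n + 1) = initWord s n ++ [s n] := by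
  simp [initWord, List.range_succ]

theorem initWord_add (s : Seq3) (m n : ℕ) :
    initWord s (m + n) = initWord s m ++ initWord (shift^[m] s) n := by
  simp [initWord, List.range_add, Function.comp_def, shift_iterate_apply]

theorem initWord_eq_iff : initWord s n = initWord t n ↔ ∀ i < n, s i = t i := by
  simp [initWord, List.map_inj_left]

theorem initWord_eq_of_le (h : initWord s n = initWord t n) (hmn : m ≤ n) :
    initWord s m = initWord t m :=
  initWord_eq_iff.mpr fun i hi => initWord_eq_iff.mp h i (hi.trans_le hmn)

theorem initWord_lt_add (h : initWord s m < initWord t m) (n : ℕ) :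
    initWord s (m + n) < initWord t (m + n) := by
  rw [initWord_add, initWord_add, append_lt_append_iff_of_length_eq (by simp)]
  exact .inl h

theorem initWord_le_of_le (h : initWord s n ≤ initWord t n) (hmn : m ≤ n) :
    initWord s m ≤ initWord t m := by
  obtain ⟨k, rfl⟩ := Nat.exists_eq_add_of_le hmn
  exact not_lt.mp fun hlt => h.not_gt (initWord_lt_add hlt k)

theorem initWord_le_of_forall_le (h : ∀ i < n, s i ≤ t i) : initWord s n ≤ initWord t n := by
  induction n with
  | zero => simp
  | succ n ih =>
    rw [initWord_succ, initWord_succ, append_le_append_iff_of_length_eq (by simp)]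
    refine (ih fun i hi => h i (by omega)).lt_or_eq.imp_right fun heq => ⟨heq, ?_⟩
    exact not_lt.mp (by simpa [List.cons_lt_cons_iff] using h n (by omega))

theorem exists_eq_initWord_shift_of_suffix {v : List (Fin 3)} (h : v <:+ initWord s n) :
    ∃ r ≤ n, v = initWord (shift^[r] s) (n - r) := by
  obtain ⟨u, hu⟩ := h
  have hlen : u.length + v.length = n := by simpa using congrArg List.length hu
  refine ⟨u.length, by omega, ?_⟩
  rw [← hlen, initWord_add] at hu
  rw [← hlen, Nat.add_sub_cancel_left]
  exact (List.append_inj hu (by simp)).2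

theorem initWord_shift_suffix (s : Seq3) (hmn : m ≤ n) :
    initWord (shift^[m] s) (n - m) <:+ initWord s n :=
  ⟨initWord s m, by rw [← initWord_add, Nat.add_sub_cancel' hmn]⟩

end InitWord

section LexOrder

variable {s t u : Seq3} {n : ℕ}

theorem initWord_succ_lt (h : ∀ i < n, s i = t i) (hn : s n < t n) :
    initWord s (n + 1) < initWord t (n + 1) := by
  rw [initWord_succ, initWord_succ, append_lt_append_iff_of_length_eq (by simp)]
  exact .inr ⟨initWord_eq_iff.mpr h, by simpa [List.cons_lt_cons_iff] using hn⟩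

theorem lexLe_iff_forall_initWord_le : lexLe s t ↔ ∀ n, initWord s n ≤ initWord t n := by
  constructor
  · rintro (rfl | ⟨n, heq, hlt⟩) m
    · rfl
    · refine initWord_le_of_le ?_ (Nat.le_add_left m (n + 1))
      exact (initWord_lt_add (initWord_succ_lt heq hlt) m).le
  · intro h
    refine or_iff_not_imp_left.mpr fun hne => ?_
    have hdiff : ∃ n, s n ≠ t n := Function.ne_iff.mp hne
    have heq : ∀ i < Nat.find hdiff, s i = t i := fun i hi => not_not.mp (Nat.find_min hdiff hi)
    refine ⟨_, heq, (Nat.find_spec hdiff).lt_of_le (not_lt.mp fun hgt => ?_)⟩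
    exact (h _).not_gt (initWord_succ_lt (fun i hi => (heq i hi).symm) hgt)

theorem not_lexLe_iff : ¬ lexLe s t ↔ lexLt t s := by
  simp only [lexLe_iff_forall_initWord_le, not_forall, not_le, lexLt]

theorem lexLe_refl (s : Seq3) : lexLe s s := .inl rfl

theorem lexLe.trans (hst : lexLe s t) (htu : lexLe t u) : lexLe s u := by
  rw [lexLe_iff_forall_initWord_le] at *
  exact fun n => (hst n).trans (htu n)

theorem lexLe_of_forall_le (h : ∀ i, s i ≤ t i) : lexLe s t :=
  lexLe_iff_forall_initWord_le.mpr fun _ => initWord_le_of_forall_le fun i _ => h i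

theorem lexLt.le (h : lexLt s t) : lexLe s t := by
  obtain ⟨n, hn⟩ := h
  refine lexLe_iff_forall_initWord_le.mpr fun m => ?_
  exact initWord_le_of_le (initWord_lt_add hn m).le (Nat.le_add_left m n)

theorem lexLe.trans_lt (hst : lexLe s t) (htu : lexLt t u) : lexLt s u := by
  rw [← not_lexLe_iff] at *
  exact fun hus => htu (hus.trans hst)

theorem lexLe_antisymm (hst : lexLe s t) (hts : lexLe t s) : s = t := by
  rw [lexLe_iff_forall_initWord_le] at *
  exact funext fun i => initWord_eq_iff.mp ((hst (i + 1)).antisymm (hts _)) i i.lt_succ_self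

theorem lexLe_of_forall_exists_agree
    (h : ∀ n, ∃ u, initWord u n = initWord t n ∧ lexLe s u) : lexLe s t := by
  refine lexLe_iff_forall_initWord_le.mpr fun n => ?_
  obtain ⟨u, hu, hsu⟩ := h n
  exact hu ▸ lexLe_iff_forall_initWord_le.mp hsu n

end LexOrder

/-- The sequence that follows `x` for `n` letters and then starts `s` from its beginning. In
particular `splice x n 0` is the truncation of `x` to its first `n` letters, padded by zeros. -/
def splice (x : Seq3) (n : ℕ) (s : Seq3) : Seq3 := fun i => if i < n then x i else s (i - n)

/-- The sequences whose shifts all lie strictly below `x`, the strict analogue of `B(x)`. -/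
def StrictBetaShift (x : Seq3) : Set Seq3 := {s | ∀ r : ℕ, lexLt (shift^[r] s) x}

section Splice

variable {x s t : Seq3} {m n : ℕ}

theorem splice_apply_of_lt {i : ℕ} (h : i < n) : splice x n s i = x i := if_pos h

theorem splice_zero_apply_of_le {i : ℕ} (h : n ≤ i) : splice x n 0 i = 0 := if_neg h.not_gt

theorem initWord_splice (h : m ≤ n) : initWord (splice x n s) m = initWord x m :=
  initWord_eq_iff.mpr fun _ hi => splice_apply_of_lt (hi.trans_le h)

theorem shift_iterate_splice (x : Seq3) (n : ℕ) (s : Seq3) : shift^[n] (splice x n s) = s := by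
  funext i
  simp [shift_iterate_apply, splice]

theorem shift_iterate_splice_zero (r : ℕ) :
    shift^[r] (splice x n 0) = splice (shift^[r] x) (n - r) 0 := by
  funext i
  simp [shift_iterate_apply, splice, Nat.lt_sub_iff_add_lt']

theorem splice_zero_lexLe (h : initWord s n ≤ initWord t n) : lexLe (splice s n 0) t := by
  rcases h.lt_or_eq with hlt | heq
  · exact lexLt.le ⟨n, by rwa [initWord_splice le_rfl]⟩
  · refine lexLe_of_forall_le fun i => ?_
    rcases lt_or_ge i n with hi | hi
    · rw [splice_apply_of_lt hi, initWord_eq_iff.mp heq i hi]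
    · rw [splice_zero_apply_of_le hi]
      exact Fin.zero_le _

theorem splice_zero_lexLe_self (x : Seq3) (n : ℕ) : lexLe (splice x n 0) x :=
  splice_zero_lexLe le_rfl

theorem splice_zero_lexLe_splice_zero (h : m ≤ n) : lexLe (splice x m 0) (splice x n 0) :=
  splice_zero_lexLe (initWord_splice h).ge

end Splice

section MaxSet

variable {w x s : Seq3} {K N L : ℕ}

theorem initWord_shift_le_of_mem_MaxSet (hw : w ∈ MaxSet) (r n : ℕ) :
    initWord (shift^[r] w) n ≤ initWord w n :=
  lexLe_iff_forall_initWord_le.mp (hw.2 r) n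

theorem splice_zero_mem_MaxSet (hw : w ∈ MaxSet) (hL : 0 < L) : splice w L 0 ∈ MaxSet := by
  refine ⟨(splice_apply_of_lt hL).trans hw.1, fun r => ?_⟩
  rw [shift_iterate_splice_zero]
  refine splice_zero_lexLe ?_
  rw [initWord_splice (Nat.sub_le L r)]
  exact initWord_shift_le_of_mem_MaxSet hw r _

/-- If `0 < r ≤ K` then the first `K + 1` letters of the `r`-th shift of the spliced sequence end
in a zero, whereas those of `x` end in `x K ≠ 0`: this makes the comparison strict. -/
theorem splice_mem_MaxSet (hx : x ∈ MaxSet) (hK : x K ≠ 0) (hzero : ∀ i > K, x i = 0)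
    (hN : 2 * (K + 1) ≤ N) (hs : s ∈ StrictBetaShift x) : splice x N s ∈ MaxSet := by
  have hfst : splice x N s 0 = 2 := (splice_apply_of_lt (by omega)).trans hx.1
  have hle : lexLe x (splice x N s) := lexLe_of_forall_le fun i => by
    rcases lt_or_ge i N with hi | hi
    · rw [splice_apply_of_lt hi]
    · rw [hzero i (by omega)]
      exact Fin.zero_le _
  refine ⟨hfst, fun r => ?_⟩
  rcases le_or_gt N r with hNr | hrN
  · obtain ⟨d, rfl⟩ := Nat.exists_eq_add_of_le' hNr
    rw [Function.iterate_add_apply, shift_iterate_splice]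
    exact (hs d).le.trans hle
  rcases lt_or_ge K r with hKr | hrK
  · refine lexLt.le ⟨1, initWord_succ_lt (n := 0) (by simp) ?_⟩
    rw [hfst, shift_iterate_apply, splice_apply_of_lt (by omega), hzero _ (by omega)]
    decide
  rcases r.eq_zero_or_pos with rfl | hr
  · exact lexLe_refl _
  have heq : initWord (shift^[r] (splice x N s)) (K + 1) = initWord (shift^[r] x) (K + 1) :=
    initWord_eq_iff.mpr fun i hi => by
      rw [shift_iterate_apply, shift_iterate_apply, splice_apply_of_lt (by omega)]
  refine lexLt.le ⟨K + 1, ?_⟩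
  rw [heq, initWord_splice (by omega)]
  refine (initWord_shift_le_of_mem_MaxSet hx r _).lt_of_ne fun h => hK ?_
  rw [← initWord_eq_iff.mp h K K.lt_succ_self, shift_iterate_apply, hzero _ (by omega)]

end MaxSet

/-- The initial word of length `k` has no border: none of its proper nonempty suffixes is also one
of its prefixes. -/
def IsUnbordered (w : Seq3) (k : ℕ) : Prop :=
  ∀ r, 0 < r → r < k → initWord (shift^[r] w) (k - r) ≠ initWord w (k - r)

/-- The sequence `w₀ … w_{K-1} (w_K + 1) 0 0 0 …`, meant for `w_K ≠ 2`. -/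
def bump (w : Seq3) (K : ℕ) : Seq3 := splice (Function.update w K (w K + 1)) (K + 1) 0

section Unbordered

variable {w : Seq3} {k K : ℕ}

theorem IsUnbordered.initWord_shift_lt (h : IsUnbordered w k) (hw : w ∈ MaxSet) {r : ℕ}
    (hr : 0 < r) (hrk : r < k) : initWord (shift^[r] w) (k - r) < initWord w (k - r) :=
  (initWord_shift_le_of_mem_MaxSet hw r _).lt_of_ne (h r hr hrk)

theorem isUnbordered_one (w : Seq3) : IsUnbordered w 1 := fun r hr hr1 => by omega

theorem bump_apply_of_lt {i : ℕ} (h : i < K) : bump w K i = w i := by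
  rw [bump, splice_apply_of_lt (by omega), Function.update_of_ne h.ne]

theorem bump_apply_self (w : Seq3) (K : ℕ) : bump w K K = w K + 1 := by
  rw [bump, splice_apply_of_lt K.lt_succ_self, Function.update_self]

theorem initWord_bump {n : ℕ} (h : n ≤ K) : initWord (bump w K) n = initWord w n :=
  initWord_eq_iff.mpr fun _ hi => bump_apply_of_lt (hi.trans_le h)

theorem IsUnbordered.lexLt_bump (h : IsUnbordered w (K + 1)) (hw : w ∈ MaxSet) (hK : 0 < K) :
    lexLt w (bump w K) := by
  have hne : w K ≠ 2 := fun hK2 => h K hK K.lt_succ_self <| initWord_eq_iff.mpr fun i hi => by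
    obtain rfl : i = 0 := by omega
    rw [shift_iterate_apply, hw.1]
    exact hK2
  refine ⟨K + 1, initWord_succ_lt (fun i hi => (bump_apply_of_lt hi).symm) ?_⟩
  rw [bump_apply_self, Fin.lt_add_one_iff]
  exact Fin.lt_last_iff_ne_last.mpr hne

theorem IsUnbordered.bump_mem_MaxSet (h : IsUnbordered w (K + 1)) (hw : w ∈ MaxSet) (hK : 0 < K) :
    bump w K ∈ MaxSet := by
  refine ⟨(bump_apply_of_lt hK).trans hw.1, fun r => ?_⟩
  rcases r.eq_zero_or_pos with rfl | hr
  · exact lexLe_refl _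
  nth_rw 1 [bump]
  rw [shift_iterate_splice_zero]
  refine splice_zero_lexLe ?_
  rw [initWord_bump (by omega)]
  rcases lt_or_ge K r with hKr | hrK
  · simp [Nat.sub_eq_zero_of_le hKr]
  have hlt := h.initWord_shift_lt hw hr (by omega)
  have hinit : initWord (shift^[r] (Function.update w K (w K + 1))) (K - r) =
      initWord (shift^[r] w) (K - r) := initWord_eq_iff.mpr fun i hi => by
    rw [shift_iterate_apply, shift_iterate_apply, Function.update_of_ne (by omega)]
  rw [Nat.succ_sub hrK, initWord_succ, initWord_succ, shift_iterate_apply,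
    Nat.add_sub_cancel' hrK, append_lt_append_iff_of_length_eq (by simp)] at hlt
  rw [Nat.succ_sub hrK, initWord_succ, initWord_succ, shift_iterate_apply,
    Nat.add_sub_cancel' hrK, hinit, Function.update_self,
    append_le_append_iff_of_length_eq (by simp)]
  refine hlt.imp_right fun ⟨heq, hletter⟩ => ⟨heq, not_lt.mp ?_⟩
  simpa [List.cons_lt_cons_iff] using Fin.add_one_le_of_lt (by
    simpa [List.cons_lt_cons_iff] using hletter)

/-- At the first place `k + n` where `w` departs from the period `k`, the word of length
`k + n + 1` becomes unbordered. -/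
theorem shift_iterate_eq_self_of_forall_not_isUnbordered (hw : w ∈ MaxSet) (hk : IsUnbordered w k)
    (hmax : ∀ K > k, ¬ IsUnbordered w K) : shift^[k] w = w := by
  by_contra hne
  have hdiff : ∃ n, shift^[k] w n ≠ w n := Function.ne_iff.mp hne
  set n := Nat.find hdiff
  have hneq : shift^[k] w n ≠ w n := Nat.find_spec hdiff
  have hagree : initWord (shift^[k] w) n = initWord w n :=
    initWord_eq_iff.mpr fun i hi => not_not.mp (Nat.find_min hdiff hi)
  refine hmax (k + (n + 1)) (by omega) fun r hr hrK hborder => ?_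
  rcases lt_trichotomy r k with hrk | rfl | hkr
  · exact hk r hr hrk (initWord_eq_of_le hborder (by omega))
  · exact hneq (initWord_eq_iff.mp hborder n (by omega))
  obtain ⟨d, rfl⟩ := Nat.exists_eq_add_of_le' hkr.le
  have hlt : initWord (shift^[k] w) (d + (n + 1 - d)) < initWord w (d + (n + 1 - d)) := by
    rw [Nat.add_sub_cancel' (by omega)]
    exact (initWord_shift_le_of_mem_MaxSet hw k _).lt_of_ne fun h =>
      hneq (initWord_eq_iff.mp h n n.lt_succ_self)
  rw [initWord_add, initWord_add, initWord_eq_of_le hagree (by omega), ← Function.iterate_add_apply,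
    append_lt_append_iff_of_length_eq rfl, show n + 1 - d = k + (n + 1) - (d + k) by omega,
    hborder] at hlt
  rcases hlt with hlt | ⟨-, hlt⟩
  · exact lt_irrefl _ hlt
  · exact (initWord_shift_le_of_mem_MaxSet hw d _).not_gt hlt

theorem exists_isUnbordered_shift_iterate_eq_self_of_bddAbove (hw : w ∈ MaxSet)
    (hbdd : BddAbove {K | IsUnbordered w K}) :
    ∃ k > 0, IsUnbordered w k ∧ shift^[k] w = w := by
  have hk : IsUnbordered w (sSup {K | IsUnbordered w K}) :=
    Nat.sSup_mem ⟨1, isUnbordered_one w⟩ hbdd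
  refine ⟨_, le_csSup hbdd (isUnbordered_one w), hk, ?_⟩
  exact shift_iterate_eq_self_of_forall_not_isUnbordered hw hk fun K hK hU =>
    (le_csSup hbdd hU).not_gt hK

end Unbordered

/-- The vector of letter counts of the word `u` minus `|u| • α`: how far `u` is from having digit
frequency `α`. -/
noncomputable def discrepancy (α : Fin 3 → ℝ) (u : List (Fin 3)) : Fin 3 → ℝ :=
  (u.map fun a => Pi.single a (1 : ℝ) - α).sum

section Discrepancy

variable {α : Fin 3 → ℝ}

@[simp] theorem discrepancy_nil (α : Fin 3 → ℝ) : discrepancy α [] = 0 := rfl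

theorem discrepancy_append (α : Fin 3 → ℝ) (u v : List (Fin 3)) :
    discrepancy α (u ++ v) = discrepancy α u + discrepancy α v := by
  simp [discrepancy]

theorem discrepancy_flatten_replicate (α : Fin 3 → ℝ) (n : ℕ) (u : List (Fin 3)) :
    discrepancy α (List.replicate n u).flatten = n • discrepancy α u := by
  induction n with
  | zero => simp
  | succ n ih => rw [List.replicate_succ, List.flatten_cons, discrepancy_append, ih, succ_nsmul']

theorem discrepancy_eq_of_perm {u v : List (Fin 3)} (h : u.Perm v) :
    discrepancy α u = discrepancy α v :=
  (h.map _).sum_eq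

theorem norm_discrepancy_le (α : Fin 3 → ℝ) (u : List (Fin 3)) :
    ‖discrepancy α u‖ ≤ (1 + ‖α‖) * u.length := by
  induction u with
  | nil => simp
  | cons a u ih =>
    have hletter : ‖(Pi.single a 1 : Fin 3 → ℝ) - α‖ ≤ 1 + ‖α‖ := by
      simpa [Pi.norm_single] using norm_sub_le (Pi.single a 1 : Fin 3 → ℝ) α
    calc ‖discrepancy α (a :: u)‖ = ‖Pi.single a 1 - α + discrepancy α u‖ := by simp [discrepancy]
      _ ≤ (1 + ‖α‖) + (1 + ‖α‖) * u.length := norm_add_le_of_le hletter ih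
      _ = (1 + ‖α‖) * (a :: u).length := by push_cast [List.length_cons]; ring

theorem discrepancy_initWord (α : Fin 3 → ℝ) (s : Seq3) (r : ℕ) :
    discrepancy α (initWord s r) = birk s r - (r : ℝ) • α := by
  induction r with
  | zero => simp [birk]
  | succ r ih =>
    have hkappa : kappa (shift^[r] s) = Pi.single (s r) 1 := by
      funext i
      simp [kappa, shift_iterate_apply, Pi.single_apply]
    rw [initWord_succ, discrepancy_append, ih, birk, birk, Finset.sum_range_succ, hkappa]
    simp only [discrepancy, List.map_cons, List.map_nil, List.sum_singleton]
    push_cast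
    module

/-- The copies of `p` push the discrepancy in one fixed direction, and only the words in `qs` can
compensate for it. -/
theorem le_mul_length_of_norm_discrepancy_le {p : List (Fin 3)} {qs : List (List (Fin 3))}
    {A n : ℕ} (hp : discrepancy α p ≠ 0)
    (hqs : ∀ q ∈ qs, q.length ≤ p.length)
    (hn : 1 + 2 * (1 + ‖α‖) * p.length / ‖discrepancy α p‖ ≤ n)
    (hdisc : ‖discrepancy α ((List.replicate A p).flatten ++ qs.flatten)‖ ≤
      ‖discrepancy α p‖ / (2 * p.length) * ((List.replicate A p).flatten ++ qs.flatten).length) :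
    A ≤ n * qs.length := by
  have hD : 0 < ‖discrepancy α p‖ := norm_pos_iff.mpr hp
  have hk : (0 : ℝ) < p.length := Nat.cast_pos.mpr <| List.length_pos_iff.mpr fun h => hp (h ▸ rfl)
  have hlen : (qs.flatten.length : ℝ) ≤ qs.length * p.length :=
    mod_cast length_flatten_le_mul hqs
  have hblocks : A * ‖discrepancy α p‖ ≤
      ‖discrepancy α p‖ / 2 * (A + qs.length) + (1 + ‖α‖) * (qs.length * p.length) :=
    calc A * ‖discrepancy α p‖ = ‖A • discrepancy α p‖ := by
          rw [RCLike.norm_nsmul ℝ, nsmul_eq_mul]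
      _ ≤ ‖A • discrepancy α p + discrepancy α qs.flatten‖ + ‖discrepancy α qs.flatten‖ :=
        norm_le_add_norm_add _ _
      _ ≤ ‖discrepancy α p‖ / (2 * p.length) * (A * p.length + qs.length * p.length) +
          (1 + ‖α‖) * (qs.length * p.length) := by
        rw [← discrepancy_flatten_replicate, ← discrepancy_append]
        refine add_le_add (hdisc.trans ?_) ((norm_discrepancy_le α _).trans (by gcongr))
        simp only [List.length_append, List.length_flatten, List.map_replicate,
          List.sum_replicate, smul_eq_mul, Nat.cast_add, Nat.cast_mul] at hlen ⊢
        gcongr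
      _ = _ := by field_simp
  have hsolve : (A : ℝ) ≤
      (1 + 2 * (1 + ‖α‖) * p.length / ‖discrepancy α p‖) * qs.length := by
    field_simp
    linarith
  have hle : (A : ℝ) ≤ n * qs.length := hsolve.trans (by gcongr)
  exact_mod_cast hle

end Discrepancy

section Frequency

open Asymptotics

variable {α : Fin 3 → ℝ} {s : Seq3}

theorem hasFreq_iff_isLittleO :
    hasFreq s α ↔ (fun r => discrepancy α (initWord s r)) =o[atTop] fun r : ℕ => (r : ℝ) := by
  have hquot : ∀ᶠ r : ℕ in atTop,
      (r : ℝ)⁻¹ • birk s r - α = (r : ℝ)⁻¹ • discrepancy α (initWord s r) := by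
    filter_upwards [eventually_ne_atTop 0] with r hr
    rw [discrepancy_initWord, smul_sub, inv_smul_smul₀ (Nat.cast_ne_zero.mpr hr)]
  rw [hasFreq, ← tendsto_sub_nhds_zero_iff, tendsto_congr' hquot,
    tendsto_zero_iff_norm_tendsto_zero, ← isLittleO_norm_norm,
    isLittleO_iff_tendsto (by simp +contextual)]
  simp_rw [norm_smul, norm_inv, div_eq_inv_mul]

theorem hasFreq_of_hasFreq_shift_iterate {n : ℕ} (h : hasFreq (shift^[n] s) α) : hasFreq s α := by
  rw [hasFreq_iff_isLittleO] at *
  have hconst : (fun _ : ℕ => discrepancy α (initWord s n)) =o[atTop] fun r : ℕ => (r : ℝ) :=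
    isLittleO_const_left.mpr (.inr (tendsto_norm_atTop_atTop.comp tendsto_natCast_atTop_atTop))
  have hle : (fun r : ℕ => (r : ℝ)) =O[atTop] fun r : ℕ => ((n + r : ℕ) : ℝ) :=
    .of_norm_le fun r => by simp
  have hadd : (fun r => discrepancy α (initWord s (n + r))) =o[atTop]
      fun r : ℕ => ((n + r : ℕ) : ℝ) := by
    simp_rw [initWord_add, discrepancy_append]
    exact (hconst.add h).trans_isBigO hle
  rw [← map_add_atTop_eq_nat n, isLittleO_map]
  simpa only [Function.comp_def, add_comm n] using hadd

theorem hasFreq_splice (x : Seq3) (n : ℕ) (h : hasFreq s α) : hasFreq (splice x n s) α :=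
  hasFreq_of_hasFreq_shift_iterate (n := n) (by rwa [shift_iterate_splice])

theorem hasFreq_of_isLittleO_gaps {N : ℕ → ℕ} (hN : StrictMono N)
    (hdisc : (fun n => discrepancy α (initWord s (N n))) =o[atTop] fun n => (N n : ℝ))
    (hgap : (fun n => ((N (n + 1) - N n : ℕ) : ℝ)) =o[atTop] fun n => (N n : ℝ)) :
    hasFreq s α := by
  refine hasFreq_iff_isLittleO.mpr (isLittleO_iff.mpr fun ε hε => ?_)
  have hC : 0 < 1 + ‖α‖ := by positivity
  obtain ⟨n₀, hn₀⟩ := eventually_atTop.mp <|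
    (hdisc.def (half_pos hε)).and (hgap.def (div_pos (half_pos hε) hC))
  filter_upwards [eventually_ge_atTop (N n₀)] with r hr
  have hex : ∃ n, r < N (n₀ + n) := ⟨r + 1, (by omega : r < _).trans_le hN.le_apply⟩
  obtain ⟨n, hn, hn'⟩ := Nat.exists_not_and_succ_of_not_zero_of_exists
    (p := fun n => r < N (n₀ + n)) hr.not_gt hex
  obtain ⟨d, rfl⟩ := Nat.exists_eq_add_of_le (not_lt.mp hn)
  obtain ⟨hdisc_le, hgap_le⟩ := hn₀ (n₀ + n) (Nat.le_add_right _ _)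
  rw [Real.norm_natCast] at hdisc_le
  rw [Real.norm_natCast, Real.norm_natCast] at hgap_le
  have hd : (d : ℝ) ≤ (N (n₀ + n + 1) - N (n₀ + n) : ℕ) := by
    rw [← Nat.add_assoc] at hn'
    exact Nat.cast_le.mpr (by omega)
  have htail : ‖discrepancy α (initWord (shift^[N (n₀ + n)] s) d)‖ ≤ ε / 2 * N (n₀ + n) :=
    calc _ ≤ (1 + ‖α‖) * d := by simpa using norm_discrepancy_le α (initWord _ d)
      _ ≤ (1 + ‖α‖) * (ε / 2 / (1 + ‖α‖) * N (n₀ + n)) := by gcongr; exact hd.trans hgap_le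
      _ = ε / 2 * N (n₀ + n) := by field_simp
  rw [initWord_add, discrepancy_append, Real.norm_natCast]
  calc _ ≤ ε / 2 * N (n₀ + n) + ε / 2 * N (n₀ + n) := norm_add_le_of_le hdisc_le htail
    _ = ε * N (n₀ + n) := by ring
    _ ≤ ε * (N (n₀ + n) + d : ℕ) := by gcongr; omega

theorem initWord_mul_of_shift_iterate_eq_self {k : ℕ} (hper : shift^[k] s = s) (n : ℕ) :
    initWord s (n * k) = (List.replicate n (initWord s k)).flatten := by
  induction n with
  | zero => simp
  | succ n ih => rw [Nat.succ_mul, Nat.add_comm, initWord_add, hper, ih]; rfl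

theorem hasFreq_of_shift_iterate_eq_self {k : ℕ} (hk : 0 < k) (hper : shift^[k] s = s)
    (hdisc : discrepancy α (initWord s k) = 0) : hasFreq s α := by
  refine hasFreq_of_isLittleO_gaps (N := fun n => n * k) (strictMono_mul_right_of_pos hk) ?_ ?_
  · simp [initWord_mul_of_shift_iterate_eq_self hper, discrepancy_flatten_replicate, hdisc]
  · simp_rw [Nat.succ_mul, Nat.add_sub_cancel_left]
    refine isLittleO_const_left.mpr (.inr (tendsto_norm_atTop_atTop.comp ?_))
    exact tendsto_natCast_atTop_atTop.comp (tendsto_id.atTop_mul_const' hk)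

end Frequency

theorem exists_tendsto_atTop_eventually_comp_le (L : ℕ → ℕ) :
    ∃ J : ℕ → ℕ, Tendsto J atTop atTop ∧ ∀ᶠ n in atTop, L (J n) ≤ n := by
  refine ⟨fun n => Nat.findGreatest (fun j => L j ≤ n) n, tendsto_atTop.mpr fun j => ?_, ?_⟩
  · filter_upwards [eventually_ge_atTop (max j (L j))] with n hn
    exact Nat.le_findGreatest ((le_max_left _ _).trans hn) ((le_max_right _ _).trans hn)
  · filter_upwards [eventually_ge_atTop (L 0)] with n hn
    exact Nat.findGreatest_spec (P := fun j => L j ≤ n) n.zero_le hn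

/-- Every nonempty suffix of the word `u` is smaller than the initial word of `x` of the same
length. Words with this property are the building blocks of sequences in `StrictBetaShift x`. -/
def SuffixLT (u : List (Fin 3)) (x : Seq3) : Prop :=
  ∀ v, v <:+ u → v ≠ [] → v < initWord x v.length

/-- The weak version of `SuffixLT`. -/
def SuffixLE (u : List (Fin 3)) (x : Seq3) : Prop :=
  ∀ v, v <:+ u → v ≤ initWord x v.length

section SuffixOrder

variable {u u' : List (Fin 3)} {x s : Seq3}

theorem suffixLT_nil (x : Seq3) : SuffixLT [] x := fun _ hv hne =>
  absurd (List.suffix_nil.mp hv) hne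

theorem SuffixLT.append (h : SuffixLT u x) (h' : SuffixLT u' x) : SuffixLT (u ++ u') x := by
  rintro v ⟨p, hp⟩ hne
  obtain ⟨t, hu, rfl⟩ | ⟨c, -, hu'⟩ := List.append_eq_append_iff.mp hp
  · rcases eq_or_ne t [] with rfl | ht
    · exact h' _ List.suffix_rfl hne
    · rw [List.length_append, initWord_add, append_lt_append_iff_of_length_eq (by simp)]
      exact .inl (h t ⟨p, hu.symm⟩ ht)
  · exact h' v ⟨c, hu'.symm⟩ hne

theorem SuffixLT.flatten {us : List (List (Fin 3))} (h : ∀ u ∈ us, SuffixLT u x) :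
    SuffixLT us.flatten x := by
  induction us with
  | nil => exact suffixLT_nil x
  | cons u us ih =>
    rw [List.forall_mem_cons] at h
    exact h.1.append (ih h.2)

theorem SuffixLT.mono {y : Seq3} (h : SuffixLT u x) (hxy : lexLe x y) : SuffixLT u y :=
  fun v hv hne => (h v hv hne).trans_le (lexLe_iff_forall_initWord_le.mp hxy _)

theorem SuffixLE.concat_lt {a b : Fin 3} (h : SuffixLE (u ++ [a]) x) (hba : b < a) :
    SuffixLT (u ++ [b]) x := by
  intro v hv hne
  obtain rfl | ⟨t, rfl, ht⟩ := List.suffix_concat_iff.mp hv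
  · exact absurd rfl hne
  have hle := h (t ++ [a]) (List.suffix_concat_iff.mpr (.inr ⟨t, rfl, ht⟩))
  simp only [List.length_append, List.length_singleton, initWord_succ] at hle ⊢
  rw [append_le_append_iff_of_length_eq (by simp)] at hle
  rw [append_lt_append_iff_of_length_eq (by simp)]
  refine hle.imp_right fun ⟨heq, hax⟩ => ⟨heq, lt_of_lt_of_le ?_ hax⟩
  simpa [List.cons_lt_cons_iff] using hba

theorem SuffixLE.of_concat {a : Fin 3} (h : SuffixLE (u ++ [a]) x) : SuffixLE u x := by
  intro v hv
  have hle := h (v ++ [a]) (List.suffix_concat_iff.mpr (.inr ⟨v, rfl, hv⟩))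
  rw [List.length_append, initWord_add, append_le_append_iff_of_length_eq (by simp)] at hle
  exact hle.elim le_of_lt fun heq => heq.1.le

theorem SuffixLE.exists_suffixLT (α : Fin 3 → ℝ) (h : SuffixLE u x) (hx : 0 < x 0) :
    ∃ u', u'.length = u.length ∧ SuffixLT u' x ∧
      ‖discrepancy α u' - discrepancy α u‖ ≤ 2 * (1 + ‖α‖) := by
  induction u using List.reverseRecOn with
  | nil => exact ⟨[], rfl, suffixLT_nil x, by rw [sub_self, norm_zero]; positivity⟩
  | append_singleton u a ih =>
    rcases (Fin.zero_le a).eq_or_lt with rfl | ha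
    · obtain ⟨u', hlen, hlt, hdisc⟩ := ih h.of_concat
      refine ⟨u' ++ [0], by simp [hlen], hlt.append fun v hv hne => ?_, ?_⟩
      · obtain rfl : v = [0] := (List.suffix_concat_iff (l₂ := []).mp hv).resolve_left hne |>.elim
          fun t ht => by simpa [List.suffix_nil.mp ht.2] using ht.1
        simpa [initWord, List.cons_lt_cons_iff] using hx
      · simpa only [discrepancy_append, add_sub_add_right_eq_sub] using hdisc
    · refine ⟨u ++ [0], by simp, h.concat_lt ha, ?_⟩
      simp only [discrepancy_append, add_sub_add_left_eq_sub]
      have hletter (b : Fin 3) : ‖discrepancy α [b]‖ ≤ 1 + ‖α‖ := by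
        simpa using norm_discrepancy_le α [b]
      linarith [norm_sub_le (discrepancy α [0]) (discrepancy α [a]), hletter 0, hletter a]

theorem mem_StrictBetaShift_of_suffixLT (h : ∀ n, ∃ m > n, SuffixLT (initWord s m) x) :
    s ∈ StrictBetaShift x := by
  intro r
  obtain ⟨m, hrm, hlt⟩ := h r
  refine ⟨m - r, ?_⟩
  simpa using hlt _ (initWord_shift_suffix s hrm.le)
    (List.ne_nil_of_length_pos (by simpa using hrm))

theorem suffixLE_initWord_shift_of_mem_MaxSet {v : Seq3} {n : ℕ} (hv : v ∈ MaxSet)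
    (hagree : initWord v n = initWord x n) (r : ℕ) : SuffixLE (initWord (shift^[r] v) n) x := by
  intro t ht
  obtain ⟨q, -, rfl⟩ := exists_eq_initWord_shift_of_suffix ht
  rw [length_initWord, ← initWord_eq_of_le hagree (Nat.sub_le n q), ← Function.iterate_add_apply]
  exact initWord_shift_le_of_mem_MaxSet hv _ _

/-- Cut `v` into blocks of length `n` and lower one letter in each. -/
theorem exists_suffixLT_of_initWord_eq {v : Seq3} {n : ℕ} (α : Fin 3 → ℝ) (hv : v ∈ MaxSet)
    (hagree : initWord v n = initWord x n) (hx : 0 < x 0) (m : ℕ) :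
    ∃ u, u.length = m * n ∧ SuffixLT u x ∧
      ‖discrepancy α u - discrepancy α (initWord v (m * n))‖ ≤ m * (2 * (1 + ‖α‖)) := by
  induction m with
  | zero => exact ⟨[], by simp, suffixLT_nil x, by simp⟩
  | succ m ih =>
    obtain ⟨u, hlen, hlt, hdisc⟩ := ih
    obtain ⟨u', hlen', hlt', hdisc'⟩ :=
      (suffixLE_initWord_shift_of_mem_MaxSet hv hagree (m * n)).exists_suffixLT α hx
    refine ⟨u ++ u', by simp [hlen, hlen', Nat.succ_mul], hlt.append hlt', ?_⟩
    rw [Nat.succ_mul, initWord_add, discrepancy_append, discrepancy_append, add_sub_add_comm,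
      Nat.cast_succ, add_one_mul]
    exact norm_add_le_of_le hdisc hdisc'

end SuffixOrder

/-- The concatenation of the first `n` words of the sequence `W`. -/
def catWord (W : ℕ → List (Fin 3)) (n : ℕ) : List (Fin 3) := ((List.range n).map W).flatten

section Concatenation

open Asymptotics

variable {W : ℕ → List (Fin 3)} {s x : Seq3} {α : Fin 3 → ℝ}

theorem exists_forall_initWord_length_eq {P : ℕ → List (Fin 3)} (hchain : ∀ n, P n <+: P (n + 1))
    (hlen : ∀ n, n ≤ (P n).length) : ∃ s, ∀ n, initWord s (P n).length = P n := by
  have hmono {m n : ℕ} (h : m ≤ n) : P m <+: P n := Nat.le_induction List.prefix_rfl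
    (fun n _ ih => ih.trans (hchain n)) n h
  refine ⟨fun i => (P (i + 1))[i]'(hlen (i + 1)), fun n => List.ext_getElem (by simp) ?_⟩
  intro i _ hi
  simp only [initWord, List.getElem_map, List.getElem_range]
  rcases le_total (i + 1) n with hin | hni
  · exact (hmono hin).getElem _
  · exact ((hmono hni).getElem hi).symm

theorem catWord_succ (W : ℕ → List (Fin 3)) (n : ℕ) : catWord W (n + 1) = catWord W n ++ W n := by
  simp [catWord, List.range_succ]

theorem length_catWord (W : ℕ → List (Fin 3)) (n : ℕ) :
    (catWord W n).length = ∑ i ∈ Finset.range n, (W i).length := by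
  induction n with
  | zero => rfl
  | succ n ih => rw [catWord_succ, List.length_append, ih, Finset.sum_range_succ]

theorem discrepancy_catWord (α : Fin 3 → ℝ) (W : ℕ → List (Fin 3)) (n : ℕ) :
    discrepancy α (catWord W n) = ∑ i ∈ Finset.range n, discrepancy α (W i) := by
  induction n with
  | zero => rfl
  | succ n ih => rw [catWord_succ, discrepancy_append, ih, Finset.sum_range_succ]

theorem strictMono_length_catWord (hne : ∀ n, W n ≠ []) :
    StrictMono fun n => (catWord W n).length :=
  strictMono_nat_of_lt_succ fun n => by
    simpa [catWord_succ] using List.length_pos_iff.mpr (hne n)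

theorem suffixLT_catWord (h : ∀ n, SuffixLT (W n) x) (n : ℕ) : SuffixLT (catWord W n) x :=
  .flatten <| by simpa using fun i _ => h i

theorem hasFreq_of_forall_initWord_eq_catWord (hne : ∀ n, W n ≠ [])
    (hs : ∀ n, initWord s (catWord W n).length = catWord W n)
    (hdisc : (fun n => discrepancy α (W n)) =o[atTop] fun n => ((W n).length : ℝ))
    (hlen : (fun n => ((W n).length : ℝ)) =o[atTop] fun n : ℕ => (n : ℝ)) : hasFreq s α := by
  have hmono := strictMono_length_catWord hne
  refine hasFreq_of_isLittleO_gaps hmono ?_ ?_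
  · have htop := tendsto_natCast_atTop_atTop (R := ℝ).comp hmono.tendsto_atTop
    simp only [Function.comp_def, length_catWord, Nat.cast_sum] at htop
    simp_rw [hs, discrepancy_catWord, length_catWord, Nat.cast_sum]
    exact hdisc.sum_range (fun _ => Nat.cast_nonneg _) htop
  · simp only [catWord_succ, List.length_append, Nat.add_sub_cancel_left]
    refine hlen.trans_isBigO (.of_norm_le fun n => ?_)
    rw [Real.norm_natCast, Nat.cast_le]
    exact hmono.le_apply

/-- Each word is repeated so many times before the next one that the length of the `n`-th word is
negligible against `n`. -/
theorem exists_suffixLT_isLittleO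
    (h : ∀ ε > 0, ∃ u, u ≠ [] ∧ SuffixLT u x ∧ ‖discrepancy α u‖ ≤ ε * u.length) :
    ∃ W : ℕ → List (Fin 3), (∀ n, W n ≠ []) ∧ (∀ n, SuffixLT (W n) x) ∧
      ((fun n => discrepancy α (W n)) =o[atTop] fun n => ((W n).length : ℝ)) ∧
      (fun n => ((W n).length : ℝ)) =o[atTop] fun n : ℕ => (n : ℝ) := by
  choose U hne hlt hdisc using fun j : ℕ => h (1 / ((j : ℝ) + 1)) Nat.one_div_pos_of_nat
  obtain ⟨J, hJ, hlen⟩ := exists_tendsto_atTop_eventually_comp_le fun j => (j + 1) * (U j).length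
  have hsmall (ε : ℝ) (hε : 0 < ε) : ∀ᶠ n in atTop, 1 / ((J n : ℝ) + 1) < ε :=
    (tendsto_one_div_add_atTop_nhds_zero_nat.comp hJ).eventually_lt_const hε
  refine ⟨fun n => U (J n), fun n => hne _, fun n => hlt _, ?_, ?_⟩
  · refine isLittleO_iff.mpr fun ε hε => ?_
    filter_upwards [hsmall ε hε] with n hn
    rw [Real.norm_natCast]
    exact (hdisc (J n)).trans (by gcongr)
  · refine isLittleO_iff.mpr fun ε hε => ?_
    filter_upwards [hsmall ε hε, hlen] with n hn hlen_n
    have hmul : ((J n : ℝ) + 1) * (U (J n)).length ≤ n := mod_cast hlen_n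
    rw [Real.norm_natCast, Real.norm_natCast]
    calc ((U (J n)).length : ℝ) ≤ 1 / ((J n : ℝ) + 1) * n := by
          rw [one_div, inv_mul_eq_div, le_div_iff₀' (by positivity)]
          exact hmul
      _ ≤ ε * n := by gcongr

theorem exists_mem_StrictBetaShift_hasFreq
    (h : ∀ ε > 0, ∃ u, u ≠ [] ∧ SuffixLT u x ∧ ‖discrepancy α u‖ ≤ ε * u.length) :
    ∃ s ∈ StrictBetaShift x, hasFreq s α := by
  obtain ⟨W, hne, hlt, hdisc, hlen⟩ := exists_suffixLT_isLittleO h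
  have hmono := strictMono_length_catWord hne
  obtain ⟨s, hs⟩ := exists_forall_initWord_length_eq (P := catWord W)
    (fun n => catWord_succ W n ▸ List.prefix_append _ _) fun n => hmono.le_apply
  refine ⟨s, mem_StrictBetaShift_of_suffixLT fun n => ?_,
    hasFreq_of_forall_initWord_eq_catWord hne hs hdisc hlen⟩
  exact ⟨_, n.lt_succ_self.trans_le hmono.le_apply, (hs (n + 1)).symm ▸ suffixLT_catWord hlt _⟩

end Concatenation

section Infimax

variable {α : Fin 3 → ℝ} {I x s w : Seq3}

theorem IsInfimax.exists_mem_MaxSet_hasFreq_initWord_eq (hI : IsInfimax α I) (n : ℕ) :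
    ∃ v ∈ MaxSet, hasFreq v α ∧ initWord v n = initWord I n := by
  obtain ⟨⟨v₀, hv₀, hfreq₀⟩, hmax, hlower, hgreatest⟩ := hI
  by_cases hle : lexLe (splice I n 2) I
  · have hge : lexLe I (splice I n 2) := lexLe_of_forall_le fun i => by
      rw [splice]
      split
      exacts [le_rfl, Fin.le_last _]
    have htwo : lexLe 2 I := by
      have hshift := shift_iterate_splice I n 2
      rw [lexLe_antisymm hle hge] at hshift
      exact hshift ▸ hmax.2 n
    have hv₀I : lexLe v₀ I := (lexLe_of_forall_le fun _ => Fin.le_last _).trans htwo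
    exact ⟨v₀, hv₀, hfreq₀, lexLe_antisymm hv₀I (hlower v₀ ⟨hv₀, hfreq₀⟩) ▸ rfl⟩
  · have hbound := mt (hgreatest (splice I n 2)) hle
    push Not at hbound
    obtain ⟨v, hv, hlt⟩ := hbound
    refine ⟨v, hv.1, hv.2, le_antisymm ?_ (lexLe_iff_forall_initWord_le.mp (hlower v hv) n)⟩
    simpa [initWord_splice] using
      lexLe_iff_forall_initWord_le.mp (not_lexLe_iff.mp hlt).le n

theorem IsInfimax.exists_suffixLT_norm_discrepancy_le (hI : IsInfimax α I) {ε : ℝ} (hε : 0 < ε) :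
    ∃ u, u ≠ [] ∧ SuffixLT u I ∧ ‖discrepancy α u‖ ≤ ε * u.length := by
  obtain ⟨n, hn⟩ := exists_nat_gt (2 * (1 + ‖α‖) / (ε / 2))
  have hnpos : 0 < n := Nat.cast_pos.mp ((by positivity : (0 : ℝ) ≤ _).trans_lt hn)
  have hlower : 2 * (1 + ‖α‖) ≤ ε / 2 * n := ((div_lt_iff₀' (half_pos hε)).mp hn).le
  obtain ⟨v, hv, hfreq, hagree⟩ := hI.exists_mem_MaxSet_hasFreq_initWord_eq n
  have hmn : Tendsto (fun m => m * n) atTop atTop := tendsto_id.atTop_mul_const' hnpos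
  obtain ⟨m, hm, hmpos⟩ :=
    ((hmn.eventually ((hasFreq_iff_isLittleO.mp hfreq).def (half_pos hε))).and
      (eventually_gt_atTop 0)).exists
  rw [Real.norm_natCast] at hm
  obtain ⟨u, hlen, hlt, hdisc⟩ :=
    exists_suffixLT_of_initWord_eq α hv hagree (by rw [hI.2.1.1]; decide) m
  refine ⟨u, List.ne_nil_of_length_pos (hlen ▸ Nat.mul_pos hmpos hnpos), hlt, ?_⟩
  calc ‖discrepancy α u‖
      ≤ ‖discrepancy α (initWord v (m * n))‖ +
          ‖discrepancy α u - discrepancy α (initWord v (m * n))‖ :=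
        norm_le_norm_add_norm_sub' _ _
    _ ≤ ε / 2 * (m * n : ℕ) + m * (2 * (1 + ‖α‖)) := add_le_add hm hdisc
    _ ≤ ε / 2 * (m * n : ℕ) + m * (ε / 2 * n) := by gcongr
    _ = ε * u.length := by rw [hlen]; push_cast; ring

theorem IsInfimax.mem_DF_of_lexLe (hI : IsInfimax α I) (hle : lexLe I w) : α ∈ DF w := by
  obtain ⟨s, hs, hfreq⟩ := exists_mem_StrictBetaShift_hasFreq fun ε hε =>
    hI.exists_suffixLT_norm_discrepancy_le hε
  exact ⟨s, fun r => (hs r).le.trans hle, hfreq⟩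

theorem IsInfimax.lexLe_of_mem_StrictBetaShift (hI : IsInfimax α I) (hx : x ∈ MaxSet) {m : ℕ}
    (hzero : ∀ i ≥ m, x i = 0) (hs : s ∈ StrictBetaShift x) (hfreq : hasFreq s α) :
    lexLe I x := by
  set K := Nat.findGreatest (fun i => x i ≠ 0) m
  have hK : x K ≠ 0 :=
    Nat.findGreatest_spec (P := fun i => x i ≠ 0) m.zero_le (by rw [hx.1]; decide)
  have hzero' : ∀ i > K, x i = 0 := fun i hi => by
    rcases le_total i m with him | hmi
    · exact not_not.mp (Nat.findGreatest_is_greatest hi him)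
    · exact hzero i hmi
  refine lexLe_of_forall_exists_agree fun n => ?_
  refine ⟨splice x (max n (2 * (K + 1))) s, initWord_splice (le_max_left _ _), hI.2.2.1 _ ⟨?_, ?_⟩⟩
  · exact splice_mem_MaxSet hx hK hzero' (le_max_right _ _) hs
  · exact hasFreq_splice x _ hfreq

end Infimax

section PeriodicMaximal

variable {w t s : Seq3} {k n : ℕ} {u : List (Fin 3)}

theorem suffixLT_initWord_append (hw : w ∈ MaxSet) (hk : IsUnbordered w k)
    (hper : shift^[k] w = w) (hne : u ≠ []) (hu : SuffixLT u (splice w n 0)) :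
    SuffixLT (initWord w k ++ u) (splice w (k + n) 0) := by
  have hmono : lexLe (splice w n 0) (splice w (k + n) 0) :=
    splice_zero_lexLe_splice_zero (Nat.le_add_left n k)
  rintro v ⟨p, hp⟩ hv
  obtain ⟨t, ht, rfl⟩ | ⟨c, -, hu'⟩ := List.append_eq_append_iff.mp hp
  · obtain ⟨r, hrk, rfl⟩ := exists_eq_initWord_shift_of_suffix (s := w) ⟨p, ht.symm⟩
    rw [List.length_append, length_initWord, initWord_add,
      append_lt_append_iff_of_length_eq (by simp), initWord_splice (by omega)]
    rcases r.eq_zero_or_pos with rfl | hr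
    · refine .inr ⟨rfl, ?_⟩
      rw [shift_iterate_splice_zero, Nat.sub_zero, hper, Nat.add_sub_cancel_left]
      exact hu u List.suffix_rfl hne
    rcases hrk.eq_or_lt with rfl | hrk
    · simpa using hu.mono hmono u List.suffix_rfl hne
    · exact .inl (hk.initWord_shift_lt hw hr hrk)
  · exact hu.mono hmono v ⟨c, hu'.symm⟩ hv

theorem suffixLT_flatten_replicate_append (hw : w ∈ MaxSet) (hk : IsUnbordered w k)
    (hper : shift^[k] w = w) (hne : u ≠ []) (hu : SuffixLT u (splice w k 0)) (l : ℕ) :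
    SuffixLT ((List.replicate l (initWord w k)).flatten ++ u) (splice w ((l + 1) * k) 0) := by
  induction l with
  | zero => simpa using hu
  | succ l ih =>
    rw [List.replicate_succ, List.flatten_cons, List.append_assoc, Nat.succ_mul, Nat.add_comm]
    exact suffixLT_initWord_append hw hk hper (by simp [hne]) ih

theorem suffixLT_initWord_of_first_difference (hw : w ∈ MaxSet) (hnk : n ≤ k)
    (hagree : ∀ m < n, initWord t m = initWord w m) (hlt : initWord t n < initWord w n) :
    SuffixLT (initWord t n) (splice w k 0) := by
  intro v hv hne
  obtain ⟨r, -, rfl⟩ := exists_eq_initWord_shift_of_suffix hv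
  rw [length_initWord, initWord_splice (by omega)]
  have hrn : r < n := by
    have hlen := List.length_pos_iff.mpr hne
    rw [length_initWord] at hlen
    omega
  rw [← Nat.add_sub_cancel' hrn.le, initWord_add, initWord_add, hagree r hrn,
    append_lt_append_iff_of_length_eq rfl] at hlt
  exact (hlt.resolve_left (lt_irrefl _)).2.trans_le (initWord_shift_le_of_mem_MaxSet hw r _)

theorem initWord_eq_or_exists_suffixLT (hw : w ∈ MaxSet) (ht : lexLe t w) (k : ℕ) :
    initWord t k = initWord w k ∨ ∃ n > 0, n ≤ k ∧ SuffixLT (initWord t n) (splice w k 0) := by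
  have hle := lexLe_iff_forall_initWord_le.mp ht
  refine (hle k).eq_or_lt.imp_right fun hlt => ?_
  have hex : ∃ n, initWord t n < initWord w n := ⟨k, hlt⟩
  refine ⟨Nat.find hex, (Nat.find_pos hex).mpr (by simp), Nat.find_min' hex hlt, ?_⟩
  refine suffixLT_initWord_of_first_difference hw (Nat.find_min' hex hlt) (fun m hm => ?_)
    (Nat.find_spec hex)
  exact (hle m).eq_of_not_lt (Nat.find_min hex hm)

theorem exists_initWord_perm_blocks (hw : w ∈ MaxSet) (hs : s ∈ BetaShift w) (hk : 0 < k)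
    (R : ℕ) :
    ∃ r ≥ R, ∃ (A : ℕ) (qs : List (List (Fin 3))),
      (∀ q ∈ qs, q ≠ [] ∧ SuffixLT q (splice w k 0) ∧ q.length ≤ k) ∧
      (initWord s r).Perm ((List.replicate A (initWord w k)).flatten ++ qs.flatten) := by
  induction R with
  | zero => exact ⟨0, le_rfl, 0, [], by simp, by simp⟩
  | succ R ih =>
    obtain ⟨r, hr, A, qs, hqs, hperm⟩ := ih
    obtain heq | ⟨n, hn, hnk, hlt⟩ := initWord_eq_or_exists_suffixLT hw (hs r) k
    · refine ⟨r + k, by omega, A + 1, qs, hqs, ?_⟩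
      rw [initWord_add, heq, List.replicate_succ, List.flatten_cons, List.append_assoc]
      exact List.perm_append_comm.trans (hperm.append_left _)
    · refine ⟨r + n, by omega, A, qs ++ [initWord (shift^[r] s) n], ?_, ?_⟩
      · rw [List.forall_mem_append, List.forall_mem_singleton]
        exact ⟨hqs, List.ne_nil_of_length_pos (by simpa), hlt, by simpa⟩
      · rw [initWord_add, List.flatten_concat, ← List.append_assoc]
        exact hperm.append_right _

theorem exists_perm_suffixLT (hw : w ∈ MaxSet) (hk : IsUnbordered w k)
    (hper : shift^[k] w = w) {A : ℕ} {qs : List (List (Fin 3))}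
    (hqs : ∀ q ∈ qs, q ≠ [] ∧ SuffixLT q (splice w k 0)) (hA : A ≤ n * qs.length) :
    ∃ u, u.Perm ((List.replicate A (initWord w k)).flatten ++ qs.flatten) ∧
      SuffixLT u (splice w ((n + 1) * k) 0) := by
  induction qs generalizing A with
  | nil =>
    obtain rfl : A = 0 := by simpa using hA
    exact ⟨[], by simp, suffixLT_nil _⟩
  | cons q qs ih =>
    rw [List.forall_mem_cons] at hqs
    obtain ⟨u, hperm, hu⟩ := ih (A := A - min A n) hqs.2 (by
      rw [List.length_cons, Nat.mul_succ] at hA; omega)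
    refine ⟨(List.replicate (min A n) (initWord w k)).flatten ++ q ++ u, ?_, .append ?_ hu⟩
    · have hsplit : List.replicate A (initWord w k) =
          List.replicate (min A n) (initWord w k) ++
            List.replicate (A - min A n) (initWord w k) := by
        rw [List.replicate_append_replicate, Nat.add_sub_cancel' (min_le_left A n)]
      rw [hsplit, List.flatten_append, List.flatten_cons, List.append_assoc, List.append_assoc]
      refine .append_left _ ((hperm.append_left q).trans ?_)
      simpa only [List.append_assoc] using
        List.perm_append_comm_assoc q (List.replicate (A - min A n) _).flatten qs.flatten
    · refine (suffixLT_flatten_replicate_append hw hk hper hqs.1.1 hqs.1.2 (min A n)).mono ?_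
      exact splice_zero_lexLe_splice_zero (by gcongr; omega)

theorem exists_mem_StrictBetaShift_truncation {α : Fin 3 → ℝ} (hw : w ∈ MaxSet) (hk : 0 < k)
    (hunb : IsUnbordered w k) (hper : shift^[k] w = w) (hne : discrepancy α (initWord w k) ≠ 0)
    (hs : s ∈ BetaShift w) (hfreq : hasFreq s α) :
    ∃ L > 0, ∃ t ∈ StrictBetaShift (splice w L 0), hasFreq t α := by
  obtain ⟨n, hn⟩ := exists_nat_ge
    (1 + 2 * (1 + ‖α‖) * (initWord w k).length / ‖discrepancy α (initWord w k)‖)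
  refine ⟨(n + 1) * k, by positivity, exists_mem_StrictBetaShift_hasFreq fun ε hε => ?_⟩
  have hlittle := hasFreq_iff_isLittleO.mp hfreq
  have hδ : 0 < ‖discrepancy α (initWord w k)‖ / (2 * (initWord w k).length) := by
    have := norm_pos_iff.mpr hne
    rw [length_initWord]
    positivity
  obtain ⟨R, hR⟩ := eventually_atTop.mp ((hlittle.def hε).and (hlittle.def hδ))
  obtain ⟨r, hr, A, qs, hqs, hperm⟩ := exists_initWord_perm_blocks hw hs hk (R + 1)
  obtain ⟨hsmall, hsmall'⟩ := hR r (by omega)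
  have hA : A ≤ n * qs.length := by
    refine le_mul_length_of_norm_discrepancy_le hne (fun q hq => ?_) hn ?_
    · simpa using (hqs q hq).2.2
    · rw [← discrepancy_eq_of_perm hperm, ← hperm.length_eq]
      simpa using hsmall'
  obtain ⟨u, hu, hlt⟩ := exists_perm_suffixLT hw hunb hper
    (fun q hq => ⟨(hqs q hq).1, (hqs q hq).2.1⟩) hA
  have hus := hu.trans hperm.symm
  have hlen : u.length = r := by simpa using hus.length_eq
  refine ⟨u, List.ne_nil_of_length_pos (by omega), hlt, ?_⟩
  rwa [discrepancy_eq_of_perm hus, hlen, ← Real.norm_natCast]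

end PeriodicMaximal

section InfimaxLowerBound

variable {α : Fin 3 → ℝ} {I w : Seq3}

theorem IsInfimax.lexLe_of_not_bddAbove_isUnbordered (hI : IsInfimax α I) (hw : w ∈ MaxSet)
    (hunbdd : ¬ BddAbove {K | IsUnbordered w K}) (hα : α ∈ DF w) : lexLe I w := by
  obtain ⟨s, hs, hfreq⟩ := hα
  refine lexLe_of_forall_exists_agree fun n => ?_
  obtain ⟨_, hunb, hlt⟩ := not_bddAbove_iff.mp hunbdd (n + 1)
  obtain ⟨d, rfl⟩ := Nat.exists_eq_add_of_lt hlt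
  have hpos : 0 < n + 1 + d := by omega
  refine ⟨bump w (n + 1 + d), initWord_bump (by omega), ?_⟩
  exact hI.lexLe_of_mem_StrictBetaShift (hunb.bump_mem_MaxSet hw hpos)
    (fun i => splice_zero_apply_of_le) (fun r => (hs r).trans_lt (hunb.lexLt_bump hw hpos)) hfreq

theorem IsInfimax.lexLe_of_shift_iterate_eq_self (hI : IsInfimax α I) (hw : w ∈ MaxSet) {k : ℕ}
    (hk : 0 < k) (hunb : IsUnbordered w k) (hper : shift^[k] w = w) (hα : α ∈ DF w) :
    lexLe I w := by
  by_cases hdisc : discrepancy α (initWord w k) = 0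
  · exact hI.2.2.1 w ⟨hw, hasFreq_of_shift_iterate_eq_self hk hper hdisc⟩
  · obtain ⟨s, hs, hfreq⟩ := hα
    obtain ⟨L, hL, t, ht, hfreq_t⟩ :=
      exists_mem_StrictBetaShift_truncation hw hk hunb hper hdisc hs hfreq
    exact (hI.lexLe_of_mem_StrictBetaShift (splice_zero_mem_MaxSet hw hL)
      (fun i => splice_zero_apply_of_le) ht hfreq_t).trans (splice_zero_lexLe_self w L)

theorem IsInfimax.lexLe_of_mem_DF (hI : IsInfimax α I) (hw : w ∈ MaxSet) (hα : α ∈ DF w) :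
    lexLe I w := by
  by_cases hbdd : BddAbove {K | IsUnbordered w K}
  · obtain ⟨k, hk, hunb, hper⟩ := exists_isUnbordered_shift_iterate_eq_self_of_bddAbove hw hbdd
    exact hI.lexLe_of_shift_iterate_eq_self hw hk hunb hper hα
  · exact hI.lexLe_of_not_bddAbove_isUnbordered hw hbdd hα

end InfimaxLowerBound

theorem stmt13_general (w : Seq3) (hw : w ∈ MaxSet) (α : Fin 3 → ℝ) (Iα : Seq3)
    (hI : IsInfimax α Iα) : α ∈ DF w ↔ lexLe Iα w :=
  ⟨hI.lexLe_of_mem_DF hw, hI.mem_DF_of_lexLe⟩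

/-- For every `w ∈ Max` and every `α ∈ Δ'`, one has `α ∈ DF(w)` if and
only if `I(α) ≤ w` in the lexicographic order. -/
theorem stmt13 (w : Seq3) (hw : w ∈ MaxSet) (α : Fin 3 → ℝ) (hα : α ∈ Delta')
    (Iα : Seq3) (hI : IsInfimax α Iα) :
    α ∈ DF w ↔ lexLe Iα w :=
  stmt13_general w hw α Iα hI
end

section
/- For every α ∈ Δ', the infimax sequence I(α) is almost periodic under the shift σ (for every neighborhood U of I(α) in Σ⁺, the set of return times {r ∈ ℕ : σʳ(I(α)) ∈ U} has bounded gaps), and consequently C_α, the closure of the σ-orbit of I(α), is a minimal set: every point of C_α has dense forward orbit in C_α. -/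
open Filter Topology MeasureTheory

/-!
Let `v` be a vector of digit frequencies, taken up to scale, with `v 2 > 0`, and let
`n = ⌊v 0 / v 2⌋`. The substitution `0 ↦ 1`, `1 ↦ 2 0ⁿ⁺¹`, `2 ↦ 2 0ⁿ` is order preserving,
preserves maximality, and turns sequences of direction `renorm v` into sequences of direction `v`.
Conversely, let `s` have direction `v`. If some `2` of `s` is followed by fewer than `n` zeros,
then a shift of `s` lies above the image of every sequence starting with `2`. Otherwise the walk
`#0 - (n + 1) * #2` along `s` goes down by at most one at each block, so it tends to `-∞` through
records. Reading the digit `1` as `0`, a `2` as `2` where the walk stays strictly below its present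
value ever after, and any other `2` as `1`, one obtains a sequence of direction `renorm v` whose
image, taken from a record on, lies below a shift of `s`. Hence the infimax sequence of `v` is the
image of the infimax sequence of `renorm v`.

Since the substituted words have bounded length, the return times to a cylinder of the infimax
sequence of `renorm v` yield return times with bounded gaps to a cylinder of that of `v` which is
at least as long, and longer if `n ≠ 0`. Unless `v` is concentrated on the digit `2`, where the
infimax sequence is constant, `n ≠ 0` recurs along the renormalisation, and all cylinders are
reached in this way.
-/

namespace Infimax

section Recurrence

/-- The subset `A` of `ℕ` is syndetic: every window of some fixed positive length meets `A`. -/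
def HasBoundedGaps (A : Set ℕ) : Prop :=
  ∃ N : ℕ, 0 < N ∧ ∀ r : ℕ, ∃ k, r ≤ k ∧ k < r + N ∧ k ∈ A

theorem HasBoundedGaps.mono {A B : Set ℕ} (hA : HasBoundedGaps A) (hAB : A ⊆ B) :
    HasBoundedGaps B := by
  obtain ⟨N, hN, hgap⟩ := hA
  refine ⟨N, hN, fun r => ?_⟩
  obtain ⟨k, hrk, hkr, hk⟩ := hgap r
  exact ⟨k, hrk, hkr, hAB hk⟩

theorem hasBoundedGaps_univ : HasBoundedGaps Set.univ :=
  ⟨1, one_pos, fun r => ⟨r, le_rfl, r.lt_succ_self, Set.mem_univ r⟩⟩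

theorem exists_le_lt_succ_of_strictMono {f : ℕ → ℕ} (hzero : f 0 = 0) (hmono : StrictMono f)
    (r : ℕ) : ∃ j, f j ≤ r ∧ r < f (j + 1) := by
  obtain ⟨j, hj, hj'⟩ := hmono.exists_between_of_tendsto_atTop hmono.tendsto_atTop
    (hzero.trans_lt r.succ_pos)
  exact ⟨j, Nat.le_of_lt_succ hj, hj'⟩

theorem HasBoundedGaps.image {A : Set ℕ} (hA : HasBoundedGaps A) {f : ℕ → ℕ} {d : ℕ}
    (hzero : f 0 = 0) (hmono : StrictMono f) (hstep : ∀ j, f (j + 1) ≤ f j + d) :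
    HasBoundedGaps (f '' A) := by
  obtain ⟨N, -, hgap⟩ := hA
  have hsteps (j i : ℕ) : f (j + i) ≤ f j + i * d := by
    induction i with
    | zero => simp
    | succ i ih => grind
  refine ⟨(N + 1) * d + 1, Nat.succ_pos _, fun r => ?_⟩
  obtain ⟨j, hj, hj'⟩ := exists_le_lt_succ_of_strictMono hzero hmono r
  obtain ⟨k, hjk, hkj, hk⟩ := hgap (j + 1)
  refine ⟨f k, (hj'.trans_le (hmono.monotone hjk)).le, ?_, k, hk, rfl⟩
  have := hmono.monotone (show k ≤ j + (N + 1) by lia)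
  have := hsteps j (N + 1)
  lia

variable {X : Type*} [TopologicalSpace X] {f : X → X} {x y : X}

theorem mapsTo_closure_orbit (hf : Continuous f) :
    Set.MapsTo f (closure {y | ∃ n : ℕ, f^[n] x = y}) (closure {y | ∃ n : ℕ, f^[n] x = y}) := by
  refine Set.MapsTo.closure ?_ hf
  rintro _ ⟨n, rfl⟩
  exact ⟨n + 1, Function.iterate_succ_apply' f n x⟩

theorem closure_orbit_subset_of_mem (hf : Continuous f)
    (hx : x ∈ closure {z | ∃ n : ℕ, f^[n] y = z}) :
    closure {z | ∃ n : ℕ, f^[n] x = z} ⊆ closure {z | ∃ n : ℕ, f^[n] y = z} := by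
  refine closure_minimal ?_ isClosed_closure
  rintro _ ⟨n, rfl⟩
  exact (mapsTo_closure_orbit hf).iterate n hx

theorem mem_closure_orbit_of_hasBoundedGaps [RegularSpace X] (hf : Continuous f)
    (hx : ∀ U ∈ 𝓝 x, HasBoundedGaps {k | f^[k] x ∈ U})
    (hy : y ∈ closure {z | ∃ n : ℕ, f^[n] x = z}) :
    x ∈ closure {z | ∃ n : ℕ, f^[n] y = z} := by
  refine mem_closure_iff_nhds.2 fun U hU => ?_
  obtain ⟨V, hV, hVclosed, hVU⟩ := exists_mem_nhds_isClosed_subset hU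
  obtain ⟨N, -, hgap⟩ := hx V hV
  have hclosed : IsClosed (⋃ k ∈ Finset.range N, f^[k] ⁻¹' V) :=
    isClosed_biUnion_finset fun k _ => hVclosed.preimage (hf.iterate k)
  have horbit : {z | ∃ n : ℕ, f^[n] x = z} ⊆ ⋃ k ∈ Finset.range N, f^[k] ⁻¹' V := by
    rintro _ ⟨r, rfl⟩
    obtain ⟨k, hrk, hkr, hk⟩ := hgap r
    refine Set.mem_biUnion (x := k - r) (Finset.mem_coe.2 (Finset.mem_range.2 (by lia))) ?_
    rwa [Set.mem_preimage, ← Function.iterate_add_apply, Nat.sub_add_cancel hrk]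
  obtain ⟨k, -, hk⟩ := Set.mem_iUnion₂.1 (closure_minimal horbit hclosed hy)
  exact ⟨f^[k] y, hVU hk, k, rfl⟩

theorem isMinimalSet_closure_orbit [RegularSpace X] [CompactSpace X] (hf : Continuous f)
    (hx : ∀ U ∈ 𝓝 x, HasBoundedGaps {k | f^[k] x ∈ U}) :
    IsMinimalSet f (closure {y | ∃ n : ℕ, f^[n] x = y}) :=
  ⟨⟨x, subset_closure ⟨0, rfl⟩⟩, isClosed_closure.isCompact, mapsTo_closure_orbit hf,
    fun _ hy => closure_orbit_subset_of_mem hf (mem_closure_orbit_of_hasBoundedGaps hf hx hy)⟩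

end Recurrence

section LexOrder

theorem shift_iterate_apply (k : ℕ) (s : Seq3) (i : ℕ) : shift^[k] s i = s (k + i) := by
  induction k generalizing i with
  | zero => simp
  | succ k ih => rw [Function.iterate_succ_apply', shift, ih]; congr 1; lia

theorem continuous_shift : Continuous shift :=
  continuous_pi fun n => continuous_apply (n + 1)

variable {r s t u w : Seq3} {m n : ℕ}

theorem lexLe_iff_toLex_le : lexLe s t ↔ toLex s ≤ toLex t := by
  rw [le_iff_eq_or_lt, toLex_inj]; rfl

theorem lexLe_rfl : lexLe s s := Or.inl rfl

theorem lexLe_trans (hrs : lexLe r s) (hst : lexLe s t) : lexLe r t :=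
  lexLe_iff_toLex_le.2 ((lexLe_iff_toLex_le.1 hrs).trans (lexLe_iff_toLex_le.1 hst))

theorem lexLe_total (s t : Seq3) : lexLe s t ∨ lexLe t s := by
  simp only [lexLe_iff_toLex_le, le_total]

theorem lexLe_iff_forall_le : lexLe s t ↔ ∀ n, (∀ i < n, s i = t i) → s n ≤ t n := by
  rw [lexLe_iff_toLex_le, ← not_lt]
  change (¬ ∃ n, (∀ i < n, t i = s i) ∧ t n < s n) ↔ _
  simp only [not_exists, not_and, not_lt, eq_comm]

theorem lexLe_of_head_lt (h : s 0 < t 0) : lexLe s t :=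
  Or.inr ⟨0, fun _ hi => absurd hi (Nat.not_lt_zero _), h⟩

theorem lexLe_of_shift_iterate_lexLe (hagree : ∀ i < n, s i = t i)
    (hle : lexLe (shift^[n] s) (shift^[n] t)) : lexLe s t := by
  refine lexLe_iff_forall_le.2 fun k hk => ?_
  rcases lt_or_ge k n with hkn | hnk
  · exact (hagree k hkn).le
  · have := lexLe_iff_forall_le.1 hle (k - n) fun i hi => by
      simpa only [shift_iterate_apply] using hk (n + i) (by lia)
    simpa only [shift_iterate_apply, Nat.add_sub_cancel' hnk] using this

/-- The sequence which agrees with `u` below `m` and vanishes from `m` on, i.e. the least sequence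
in the cylinder of length `m` around `u`. -/
def truncate (u : Seq3) (m : ℕ) : Seq3 := fun i => if i < m then u i else 0

theorem truncate_mem_cylinder (u : Seq3) (m : ℕ) : truncate u m ∈ PiNat.cylinder u m :=
  fun _ hi => if_pos hi

theorem truncate_lexLe_of_mem_cylinder (hw : w ∈ PiNat.cylinder u m) :
    lexLe (truncate u m) w := by
  refine lexLe_of_shift_iterate_lexLe (n := m) (fun i hi => ?_) ?_
  · rw [truncate_mem_cylinder u m i hi, hw i hi]
  · refine lexLe_iff_forall_le.2 fun i _ => ?_
    simp [shift_iterate_apply, truncate]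

theorem mem_cylinder_of_lexLe_of_lexLe (hs : lexLe (truncate u m) s) (hsw : lexLe s w)
    (hw : w ∈ PiNat.cylinder u m) : s ∈ PiNat.cylinder u m := by
  intro i
  induction i using Nat.strong_induction_on with
  | _ i ih =>
    intro hi
    have hlow : truncate u m i ≤ s i := lexLe_iff_forall_le.1 hs i fun j hj => by
      rw [ih j hj (hj.trans hi), truncate_mem_cylinder u m j (hj.trans hi)]
    have hupp : s i ≤ w i := lexLe_iff_forall_le.1 hsw i fun j hj => by
      rw [ih j hj (hj.trans hi), hw j (hj.trans hi)]
    rw [truncate_mem_cylinder u m i hi] at hlow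
    rw [hw i hi] at hupp
    exact le_antisymm hupp hlow

end LexOrder

/-- The concatenation of a finite word with a sequence. -/
def prepend (l : List (Fin 3)) (s : Seq3) : Seq3 := fun n => l.getD n (s (n - l.length))

section Words

variable {l l' : List (Fin 3)} {s t : Seq3} {a : Fin 3}

theorem prepend_apply_of_lt {i : ℕ} (hi : i < l.length) : prepend l s i = l[i] := by
  simp [prepend, hi]

theorem prepend_apply_length_add (l : List (Fin 3)) (s : Seq3) (i : ℕ) :
    prepend l s (l.length + i) = s i := by
  simp [prepend]

theorem prepend_cons_zero : prepend (a :: l) s 0 = a := rfl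

theorem shift_prepend_cons : shift (prepend (a :: l) s) = prepend l s := by
  funext n
  simp [shift, prepend]

theorem prepend_append : prepend (l ++ l') s = prepend l (prepend l' s) := by
  funext n
  rcases lt_or_ge n l.length with hn | hn
  · rw [prepend_apply_of_lt hn, prepend, List.getD_append _ _ _ _ hn, List.getD_eq_getElem _ _ hn]
  · obtain ⟨k, rfl⟩ := Nat.exists_eq_add_of_le hn
    rw [prepend_apply_length_add, prepend, List.getD_append_right _ _ _ _ hn, List.length_append,
      Nat.add_sub_add_left, Nat.add_sub_cancel_left]
    rfl

theorem shift_iterate_length_prepend (l : List (Fin 3)) (s : Seq3) :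
    shift^[l.length] (prepend l s) = s := by
  funext i
  rw [shift_iterate_apply, prepend_apply_length_add]

theorem prepend_lexLe_prepend (l : List (Fin 3)) (h : lexLe s t) :
    lexLe (prepend l s) (prepend l t) := by
  refine lexLe_of_shift_iterate_lexLe (n := l.length) (fun i hi => ?_) ?_
  · rw [prepend_apply_of_lt hi, prepend_apply_of_lt hi]
  · rwa [shift_iterate_length_prepend, shift_iterate_length_prepend]

theorem lexLe_coinduction (R : Seq3 → Seq3 → Prop)
    (hR : ∀ s t, R s t → lexLe s t ∨
      ∃ l ≠ [], ∃ s' t', s = prepend l s' ∧ t = prepend l t' ∧ R s' t')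
    (hst : R s t) : lexLe s t := by
  refine lexLe_iff_forall_le.2 fun n => ?_
  induction n using Nat.strong_induction_on generalizing s t with
  | _ n ih =>
    intro hagree
    rcases hR s t hst with hle | ⟨l, hl, s', t', rfl, rfl, hst'⟩
    · exact lexLe_iff_forall_le.1 hle n hagree
    rcases lt_or_ge n l.length with hn | hn
    · rw [prepend_apply_of_lt hn, prepend_apply_of_lt hn]
    · obtain ⟨k, rfl⟩ := Nat.exists_eq_add_of_le hn
      have hpos := List.length_pos_iff.2 hl
      simp only [prepend_apply_length_add]
      exact ih k (by lia) hst' fun i hi => by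
        simpa only [prepend_apply_length_add] using hagree (l.length + i) (by lia)

/-- The concatenation of a sequence of words. It is meaningful for nonempty words: the letter in
position `n` is then already determined by the first `n + 1` of them. -/
def flatten (b : ℕ → List (Fin 3)) : Seq3 := fun n => ((List.range (n + 1)).flatMap b).getD n 0

/-- The position at which the `J`-th word starts in the concatenation `flatten b`. -/
def blockStart (b : ℕ → List (Fin 3)) (J : ℕ) : ℕ := ∑ j ∈ Finset.range J, (b j).length

variable {b b' : ℕ → List (Fin 3)}

theorem blockStart_zero : blockStart b 0 = 0 := rfl

theorem blockStart_succ (J : ℕ) : blockStart b (J + 1) = blockStart b J + (b J).length :=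
  Finset.sum_range_succ _ J

theorem strictMono_blockStart (hb : ∀ j, b j ≠ []) : StrictMono (blockStart b) :=
  strictMono_nat_of_lt_succ fun J => by
    rw [blockStart_succ]
    exact Nat.lt_add_of_pos_right (List.length_pos_iff.2 (hb J))

theorem length_le_length_flatMap_range (hb : ∀ j, b j ≠ []) (n : ℕ) :
    n ≤ ((List.range n).flatMap b).length := by
  induction n with
  | zero => simp
  | succ n ih =>
    have := List.length_pos_iff.2 (hb n)
    simp only [List.range_succ, List.flatMap_append, List.flatMap_singleton, List.length_append]
    lia

theorem flatten_eq_getD (hb : ∀ j, b j ≠ []) {n m : ℕ} (hnm : n < m) :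
    flatten b n = ((List.range m).flatMap b).getD n 0 := by
  obtain ⟨k, rfl⟩ := Nat.exists_eq_add_of_lt hnm
  rw [flatten, Nat.add_right_comm, List.range_add (n := n + 1), List.flatMap_append,
    List.getD_append _ _ _ _ (length_le_length_flatMap_range hb (n + 1))]

theorem flatten_eq_prepend (hb : ∀ j, b j ≠ []) :
    flatten b = prepend (b 0) (flatten (fun j => b (j + 1))) := by
  funext n
  rw [flatten, List.range_succ_eq_map, List.flatMap_cons, List.flatMap_map]
  rcases lt_or_ge n (b 0).length with hn | hn
  · rw [prepend_apply_of_lt hn, List.getD_append _ _ _ _ hn, List.getD_eq_getElem _ _ hn]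
  · have hpos := List.length_pos_iff.2 (hb 0)
    obtain ⟨k, rfl⟩ := Nat.exists_eq_add_of_le hn
    rw [prepend_apply_length_add, List.getD_append_right _ _ _ _ hn, Nat.add_sub_cancel_left,
      flatten_eq_getD (fun j => hb (j + 1)) (show k < (b 0).length + k by lia)]

theorem shift_iterate_blockStart_flatten (hb : ∀ j, b j ≠ []) (J : ℕ) :
    shift^[blockStart b J] (flatten b) = flatten (fun j => b (J + j)) := by
  induction J with
  | zero => simp [blockStart_zero]
  | succ J ih =>
    rw [blockStart_succ, add_comm, Function.iterate_add_apply, ih,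
      flatten_eq_prepend (fun j => hb (J + j)), Nat.add_zero, shift_iterate_length_prepend]
    congr 1; funext j; congr 1; lia

theorem flatten_blockStart_add (hb : ∀ j, b j ≠ []) {j i : ℕ} (hi : i < (b j).length) :
    flatten b (blockStart b j + i) = (b j)[i] := by
  rw [← shift_iterate_apply _ (flatten b), shift_iterate_blockStart_flatten hb,
    flatten_eq_prepend (fun k => hb (j + k))]
  exact prepend_apply_of_lt hi

theorem exists_eq_blockStart_add (hb : ∀ j, b j ≠ []) (n : ℕ) :
    ∃ j i, i < (b j).length ∧ n = blockStart b j + i := by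
  obtain ⟨j, hj, hj'⟩ :=
    exists_le_lt_succ_of_strictMono blockStart_zero (strictMono_blockStart hb) n
  rw [blockStart_succ] at hj'
  exact ⟨j, n - blockStart b j, by lia, by lia⟩

theorem blockStart_congr {J : ℕ} (h : ∀ j < J, b j = b' j) : blockStart b J = blockStart b' J :=
  Finset.sum_congr rfl fun j hj => by rw [h j (Finset.mem_range.1 hj)]

theorem flatten_mem_cylinder (hb : ∀ j, b j ≠ []) (hb' : ∀ j, b' j ≠ []) {J : ℕ}
    (h : ∀ j < J, b j = b' j) : flatten b ∈ PiNat.cylinder (flatten b') (blockStart b' J) := by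
  intro n hn
  obtain ⟨j, i, hi, rfl⟩ := exists_eq_blockStart_add hb' n
  have hj : j < J := (strictMono_blockStart hb').lt_iff_lt.1 (lt_of_le_of_lt (by lia) hn)
  rw [← blockStart_congr fun k hk => h k (hk.trans hj), flatten_blockStart_add hb (by rwa [h j hj]),
    blockStart_congr fun k hk => h k (hk.trans hj), flatten_blockStart_add hb' hi]
  simp only [h j hj]

end Words

section Directions

/-- The number of occurrences of the digit `a` among the first `N` digits of `s`. -/
def digitCount (a : Fin 3) (s : Seq3) (N : ℕ) : ℕ := Nat.count (s · = a) N

/-- The digit frequencies of `s` exist and are proportional to `v`. In contrast to `hasFreq` the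
vector `v` is not normalised, which makes the action of substitutions on it linear. -/
def HasDirection (s : Seq3) (v : Fin 3 → ℝ) : Prop :=
  ∀ a, Tendsto (fun N : ℕ => (digitCount a s N : ℝ) / N) atTop (𝓝 (v a / ∑ i, v i))

variable {a : Fin 3} {s : Seq3} {v : Fin 3 → ℝ} {b : ℕ → List (Fin 3)} {l : List (Fin 3)}

theorem digitCount_zero : digitCount a s 0 = 0 := Nat.count_zero _

theorem digitCount_succ (N : ℕ) :
    digitCount a s (N + 1) = digitCount a s N + if s N = a then 1 else 0 := Nat.count_succ _ N

theorem digitCount_add (M N : ℕ) :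
    digitCount a s (M + N) = digitCount a s M + digitCount a (shift^[M] s) N := by
  simp only [digitCount, Nat.count_add, shift_iterate_apply]

theorem monotone_digitCount (a : Fin 3) (s : Seq3) : Monotone (digitCount a s) :=
  Nat.count_monotone _

theorem sum_digitCount (s : Seq3) (N : ℕ) : ∑ a, digitCount a s N = N := by
  induction N with
  | zero => simp [digitCount_zero]
  | succ N ih => simp [digitCount_succ, Finset.sum_add_distrib, ih]

theorem digitCount_length_prepend (a : Fin 3) (l : List (Fin 3)) (s : Seq3) :
    digitCount a (prepend l s) l.length = l.count a := by
  induction l with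
  | nil => rfl
  | cons x l ih =>
    rw [List.length_cons, add_comm, digitCount_add, List.count_cons, add_comm (l.count a)]
    congr 1
    · by_cases hx : x = a <;> simp [digitCount, Nat.count_succ, prepend_cons_zero, hx]
    · rw [Function.iterate_one, shift_prepend_cons, ih]

theorem digitCount_blockStart_flatten (hb : ∀ j, b j ≠ []) (J : ℕ) :
    digitCount a (flatten b) (blockStart b J) = ∑ j ∈ Finset.range J, (b j).count a := by
  induction J with
  | zero => rfl
  | succ J ih =>
    rw [blockStart_succ, digitCount_add, ih, Finset.sum_range_succ,
      shift_iterate_blockStart_flatten hb, flatten_eq_prepend fun j => hb (J + j)]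
    exact congrArg _ (digitCount_length_prepend a (b J) _)

theorem birk_apply (s : Seq3) (N : ℕ) (a : Fin 3) : birk s N a = digitCount a s N := by
  induction N with
  | zero => simp [birk, digitCount_zero]
  | succ N ih =>
    rw [birk, Finset.sum_range_succ, Pi.add_apply, ← birk, ih, digitCount_succ]
    simp [kappa, shift_iterate_apply, eq_comm]

theorem hasFreq_iff_hasDirection (hv : ∑ i, v i = 1) : hasFreq s v ↔ HasDirection s v := by
  simp only [hasFreq, HasDirection, hv, div_one, tendsto_pi_nhds, Pi.smul_apply, smul_eq_mul,
    birk_apply, inv_mul_eq_div]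

theorem hasDirection_of_tendsto_div {g : ℕ → ℝ} {c : ℝ} (hc : c ≠ 0) (hv : ∑ i, v i ≠ 0)
    (h : ∀ a, Tendsto (fun N => (digitCount a s N : ℝ) / g N) atTop (𝓝 (v a / c))) :
    HasDirection s v := by
  have hlength : Tendsto (fun N : ℕ => (N : ℝ) / g N) atTop (𝓝 ((∑ i, v i) / c)) := by
    have hsum := tendsto_finsetSum Finset.univ fun a _ => h a
    simp only [← Finset.sum_div, ← Nat.cast_sum, sum_digitCount] at hsum
    exact hsum
  intro a
  have hquot := (h a).div hlength (div_ne_zero hv hc)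
  rw [div_div_div_cancel_right₀ hc] at hquot
  refine hquot.congr' ?_
  filter_upwards [hlength.eventually_ne (div_ne_zero hv hc)] with N hN
  have hgN : g N ≠ 0 := fun h0 => hN (by rw [h0, div_zero])
  exact div_div_div_cancel_right₀ hgN _ _

theorem tendsto_div_of_le_of_le {C T j : ℕ → ℕ} {x : ℝ} (hC : Monotone C)
    (hj : Tendsto j atTop atTop) (hlow : ∀ N, T (j N) ≤ N) (hupp : ∀ N, N ≤ T (j N + 1))
    (h : Tendsto (fun J => (C (T J) : ℝ) / J) atTop (𝓝 x)) :
    Tendsto (fun N => (C N : ℝ) / j N) atTop (𝓝 x) := by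
  have hnext : Tendsto (fun J => (C (T (J + 1)) : ℝ) / J) atTop (𝓝 x) := by
    have hratio : Tendsto (fun J : ℕ => ((J + 1 : ℕ) : ℝ) / J) atTop (𝓝 1) := by
      simpa using tendsto_natCast_div_add_atTop (1 : ℝ) |>.inv₀ one_ne_zero
    have hprod := ((tendsto_add_atTop_iff_nat 1).2 h).mul hratio
    rw [mul_one] at hprod
    exact hprod.congr fun J => div_mul_div_cancel₀ (by positivity)
  refine tendsto_of_tendsto_of_tendsto_of_le_of_le (h.comp hj) (hnext.comp hj)
    (fun N => ?_) (fun N => ?_)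
  · exact div_le_div_of_nonneg_right (Nat.cast_le.2 (hC (hlow N))) (Nat.cast_nonneg _)
  · exact div_le_div_of_nonneg_right (Nat.cast_le.2 (hC (hupp N))) (Nat.cast_nonneg _)

theorem hasDirection_of_tendsto_strictMono {T : ℕ → ℕ} {c : ℝ} (hc : c ≠ 0) (hv : ∑ i, v i ≠ 0)
    (hT : StrictMono T) (hT0 : T 0 = 0)
    (h : ∀ a, Tendsto (fun J => (digitCount a s (T J) : ℝ) / J) atTop (𝓝 (v a / c))) :
    HasDirection s v := by
  choose j hj hj' using exists_le_lt_succ_of_strictMono hT0 hT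
  have hjtop : Tendsto j atTop atTop := tendsto_atTop.2 fun M => by
    filter_upwards [eventually_ge_atTop (T M)] with N hN
    exact Nat.le_of_lt_succ (hT.lt_iff_lt.1 (hN.trans_lt (hj' N)))
  exact hasDirection_of_tendsto_div hc hv fun a =>
    tendsto_div_of_le_of_le (monotone_digitCount a s) hjtop hj (fun N => (hj' N).le) (h a)

theorem hasDirection_flatten {c : ℝ} (hb : ∀ j, b j ≠ []) (hc : c ≠ 0) (hv : ∑ i, v i ≠ 0)
    (h : ∀ a, Tendsto (fun J : ℕ => ((∑ j ∈ Finset.range J, (b j).count a : ℕ) : ℝ) / J) atTop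
      (𝓝 (v a / c))) : HasDirection (flatten b) v :=
  hasDirection_of_tendsto_strictMono hc hv (strictMono_blockStart hb) blockStart_zero fun a => by
    simpa only [digitCount_blockStart_flatten hb] using h a

theorem HasDirection.prepend (hs : HasDirection s v) (l : List (Fin 3)) :
    HasDirection (prepend l s) v := by
  intro a
  refine (tendsto_add_atTop_iff_nat l.length).1 ?_
  have hcount (N : ℕ) :
      digitCount a (Infimax.prepend l s) (N + l.length) = l.count a + digitCount a s N := by
    rw [add_comm, digitCount_add, digitCount_length_prepend, shift_iterate_length_prepend]
  have hratio := tendsto_natCast_div_add_atTop (l.length : ℝ)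
  have hconst : Tendsto (fun N : ℕ => (l.count a : ℝ) / (N + l.length : ℕ)) atTop (𝓝 0) :=
    (tendsto_add_atTop_iff_nat l.length).2 (tendsto_const_div_atTop_nhds_zero_nat (l.count a : ℝ))
  have hlim := hconst.add ((hs a).mul hratio)
  rw [zero_add, mul_one] at hlim
  refine hlim.congr' ?_
  filter_upwards [eventually_gt_atTop 0] with N hN
  rw [hcount]
  push_cast
  field_simp

end Directions

section Substitution

/-- The word substituted for the digit `a`: `0 ↦ 1`, `1 ↦ 2 0ⁿ⁺¹`, `2 ↦ 2 0ⁿ`. -/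
def block (n : ℕ) (a : Fin 3) : List (Fin 3) :=
  ![[1], 2 :: List.replicate (n + 1) 0, 2 :: List.replicate n 0] a

/-- The words substituted for the successive digits of `w`. -/
abbrev blocks (n : ℕ) (w : Seq3) : ℕ → List (Fin 3) := fun j => block n (w j)

/-- The image of `w` under the substitution `block n`. -/
def substitution (n : ℕ) (w : Seq3) : Seq3 := flatten (blocks n w)

variable {n : ℕ} {w w' u z : Seq3} {v v' : Fin 3 → ℝ}

theorem block_ne_nil (n : ℕ) (a : Fin 3) : block n a ≠ [] := by
  fin_cases a <;> simp [block]

theorem blocks_ne_nil (n : ℕ) (w : Seq3) (j : ℕ) : blocks n w j ≠ [] := block_ne_nil n (w j)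

theorem length_block_le (n : ℕ) (a : Fin 3) : (block n a).length ≤ n + 2 := by
  fin_cases a <;> simp [block]

theorem block_getElem_eq_zero {a : Fin 3} {i : ℕ} (hi : i < (block n a).length) (hpos : 0 < i) :
    (block n a)[i] = 0 := by
  obtain ⟨i, rfl⟩ := Nat.exists_eq_succ_of_ne_zero hpos.ne'
  fin_cases a
  · simp [block] at hi
  all_goals simp [block]

theorem substitution_eq_prepend (n : ℕ) (w : Seq3) :
    substitution n w = prepend (block n (w 0)) (substitution n (shift w)) :=
  flatten_eq_prepend (blocks_ne_nil n w)

theorem shift_iterate_substitution (n : ℕ) (w : Seq3) (j : ℕ) :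
    shift^[blockStart (blocks n w) j] (substitution n w) = substitution n (shift^[j] w) := by
  rw [substitution, shift_iterate_blockStart_flatten (blocks_ne_nil n w)]
  exact congrArg flatten (funext fun i => by rw [blocks, blocks, shift_iterate_apply])

theorem substitution_zero_ne_zero (n : ℕ) (w : Seq3) : substitution n w 0 ≠ 0 := by
  rw [substitution_eq_prepend]
  generalize w 0 = a
  fin_cases a <;> simp [block, prepend]

theorem substitution_zero_of_ne_zero (h : w 0 ≠ 0) : substitution n w 0 = 2 := by
  rw [substitution_eq_prepend]
  generalize w 0 = a at h
  fin_cases a <;> simp_all [block, prepend]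

theorem substitution_mem_cylinder {J : ℕ} (hw : w' ∈ PiNat.cylinder w J) :
    substitution n w' ∈ PiNat.cylinder (substitution n w) (blockStart (blocks n w) J) :=
  flatten_mem_cylinder (blocks_ne_nil n w') (blocks_ne_nil n w) fun j hj => by
    simp only [blocks, hw j hj]

theorem prepend_two_replicate_lexLe {e m : ℕ} (hem : e < m) (hz : z 0 ≠ 0) :
    lexLe (prepend (2 :: List.replicate m 0) u) (prepend (2 :: List.replicate e 0) z) := by
  obtain ⟨k, rfl⟩ := Nat.exists_eq_add_of_lt hem
  rw [add_assoc, List.replicate_add, ← List.cons_append, prepend_append]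
  refine prepend_lexLe_prepend _ (lexLe_of_head_lt ?_)
  rw [List.replicate_succ, prepend_cons_zero]
  exact Fin.pos_iff_ne_zero.2 hz

theorem substitution_lexLe_of_head_lt (h : w 0 < w' 0) :
    lexLe (substitution n w) (substitution n w') := by
  rcases eq_or_ne (w 0) 0 with h0 | h0
  · refine lexLe_of_head_lt ?_
    have hw' : w' 0 ≠ 0 := by lia
    rw [substitution_zero_of_ne_zero hw', substitution_eq_prepend n w, h0]
    exact (by decide : (1 : Fin 3) < 2)
  · have hw : w 0 = 1 := by lia
    have hw' : w' 0 = 2 := by lia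
    rw [substitution_eq_prepend n w, substitution_eq_prepend n w', hw, hw']
    exact prepend_two_replicate_lexLe n.lt_succ_self (substitution_zero_ne_zero n _)

theorem substitution_lexLe_substitution (n : ℕ) (h : lexLe w w') :
    lexLe (substitution n w) (substitution n w') := by
  rcases h with rfl | ⟨k, hagree, hlt⟩
  · exact lexLe_rfl
  have hcyl : w' ∈ PiNat.cylinder w k := fun i hi => (hagree i hi).symm
  have hstart : blockStart (blocks n w) k = blockStart (blocks n w') k :=
    blockStart_congr fun j hj => by simp only [blocks, hagree j hj]
  refine lexLe_of_shift_iterate_lexLe (n := blockStart (blocks n w) k)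
    (fun i hi => (substitution_mem_cylinder hcyl i hi).symm) ?_
  rw [shift_iterate_substitution, hstart, shift_iterate_substitution]
  exact substitution_lexLe_of_head_lt (by simpa only [shift_iterate_apply, add_zero] using hlt)

theorem substitution_mem_maxSet (n : ℕ) (hw : w ∈ MaxSet) : substitution n w ∈ MaxSet := by
  have hhead : substitution n w 0 = 2 := substitution_zero_of_ne_zero (by rw [hw.1]; decide)
  refine ⟨hhead, fun r => ?_⟩
  obtain ⟨j, i, hi, rfl⟩ := exists_eq_blockStart_add (blocks_ne_nil n w) r
  rcases Nat.eq_zero_or_pos i with rfl | hpos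
  · rw [add_zero, shift_iterate_substitution]
    exact substitution_lexLe_substitution n (hw.2 j)
  · refine lexLe_of_head_lt ?_
    rw [hhead, shift_iterate_apply, add_zero, substitution,
      flatten_blockStart_add (blocks_ne_nil n w) hi, block_getElem_eq_zero hi hpos]
    decide

theorem sum_range_comp_eq_sum_digitCount (f : Fin 3 → ℕ) (w : Seq3) (J : ℕ) :
    ∑ j ∈ Finset.range J, f (w j) = ∑ x, digitCount x w J * f x := by
  induction J with
  | zero => simp [digitCount_zero]
  | succ J ih =>
    simp [Finset.sum_range_succ, ih, digitCount_succ, add_mul, Finset.sum_add_distrib]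

theorem HasDirection.substitution (hw : HasDirection w v') (hv' : ∑ i, v' i ≠ 0)
    (hv : ∑ i, v i ≠ 0) (hcount : ∀ a, ∑ x, v' x * (block n x).count a = v a) :
    HasDirection (substitution n w) v := by
  refine hasDirection_flatten (blocks_ne_nil n w) hv' hv fun a => ?_
  have hlim := tendsto_finsetSum Finset.univ fun x _ =>
    (hw x).mul_const ((block n x).count a : ℝ)
  simp only [div_mul_eq_mul_div, ← Finset.sum_div, hcount] at hlim
  refine hlim.congr fun J => ?_
  rw [sum_range_comp_eq_sum_digitCount fun x => (block n x).count a]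
  push_cast
  rfl

end Substitution

section Renormalisation

/-- The positive multiples of the points of `Δ'`. -/
structure IsAdmissible (v : Fin 3 → ℝ) : Prop where
  zero_nonneg : 0 ≤ v 0
  one_nonneg : 0 ≤ v 1
  two_pos : 0 < v 2

/-- The integer `n` for which `block n` renormalises the direction `v`. -/
noncomputable def floorRatio (v : Fin 3 → ℝ) : ℕ := ⌊v 0 / v 2⌋₊

/-- The direction whose image under `block (floorRatio v)` is `v`. -/
noncomputable def renorm (v : Fin 3 → ℝ) : Fin 3 → ℝ :=
  ![v 1, v 0 - floorRatio v * v 2, (floorRatio v + 1) * v 2 - v 0]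

variable {v : Fin 3 → ℝ}

namespace IsAdmissible

theorem sum_pos (hv : IsAdmissible v) : 0 < ∑ i, v i := by
  rw [Fin.sum_univ_three]
  linarith [hv.zero_nonneg, hv.one_nonneg, hv.two_pos]

theorem floorRatio_mul_le (hv : IsAdmissible v) : floorRatio v * v 2 ≤ v 0 :=
  (le_div_iff₀ hv.two_pos).1 (Nat.floor_le (div_nonneg hv.zero_nonneg hv.two_pos.le))

theorem lt_floorRatio_add_one_mul (hv : IsAdmissible v) : v 0 < (floorRatio v + 1) * v 2 :=
  (div_lt_iff₀ hv.two_pos).1 (Nat.lt_floor_add_one _)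

theorem renorm (hv : IsAdmissible v) : IsAdmissible (renorm v) where
  zero_nonneg := hv.one_nonneg
  one_nonneg := sub_nonneg.2 hv.floorRatio_mul_le
  two_pos := sub_pos.2 hv.lt_floorRatio_add_one_mul

theorem iterate_renorm (hv : IsAdmissible v) (k : ℕ) : IsAdmissible (Infimax.renorm^[k] v) :=
  Function.Iterate.rec IsAdmissible hv (fun _ => renorm) k

end IsAdmissible

theorem HasDirection.substitution_floorRatio {w : Seq3} (hv : IsAdmissible v)
    (hw : HasDirection w (renorm v)) : HasDirection (Infimax.substitution (floorRatio v) w) v := by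
  refine hw.substitution hv.renorm.sum_pos.ne' hv.sum_pos.ne' fun a => ?_
  fin_cases a <;> simp [Fin.sum_univ_three, block, renorm, List.count_replicate] <;> ring

theorem renorm_renorm_eq (h : floorRatio v = 0) (h' : floorRatio (renorm v) = 0) :
    renorm (renorm v) = ![v 0, v 1, v 2 - (v 0 + v 1)] := by
  rw [renorm, h']
  simp [renorm, h, sub_sub]

theorem iterate_two_mul_renorm_eq (h : ∀ k, floorRatio (renorm^[k] v) = 0) (k : ℕ) :
    renorm^[2 * k] v = ![v 0, v 1, v 2 - k * (v 0 + v 1)] := by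
  induction k with
  | zero =>
    funext i
    fin_cases i <;> simp
  | succ k ih =>
    have hnext := h (2 * k + 1)
    rw [Function.iterate_succ_apply'] at hnext
    rw [show 2 * (k + 1) = 2 * k + 1 + 1 by ring, Function.iterate_succ_apply',
      Function.iterate_succ_apply', renorm_renorm_eq (h (2 * k)) hnext, ih]
    funext i
    fin_cases i <;> simp
    ring

theorem exists_floorRatio_iterate_renorm_ne_zero (hv : IsAdmissible v) (hpos : 0 < v 0 + v 1) :
    ∃ k, floorRatio (renorm^[k] v) ≠ 0 := by
  by_contra! h
  obtain ⟨k, hk⟩ := Archimedean.arch (v 2) hpos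
  have htwo := (hv.iterate_renorm (2 * k)).two_pos
  rw [iterate_two_mul_renorm_eq h] at htwo
  rw [nsmul_eq_mul] at hk
  exact (sub_pos.1 htwo).not_ge hk

/-- Statements about prefixes of length `m` of sequences with direction `v` follow from those for
`renorm v`; the length gained whenever `floorRatio v ≠ 0` makes the induction terminate. -/
theorem renorm_induction {F : ℕ → (Fin 3 → ℝ) → Prop}
    (one : ∀ v, IsAdmissible v → F 1 v)
    (vertex : ∀ m v, IsAdmissible v → v 0 = 0 → v 1 = 0 → F m v)
    (step : ∀ m v, 1 ≤ m → IsAdmissible v → F m (renorm v) → F m v)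
    (grow : ∀ m v, 1 ≤ m → IsAdmissible v → floorRatio v ≠ 0 → F m (renorm v) → F (m + 1) v)
    {m : ℕ} (hm : 1 ≤ m) (hv : IsAdmissible v) : F m v := by
  induction m, hm using Nat.le_induction generalizing v with
  | base => exact one v hv
  | succ m hm ih =>
    rcases (add_nonneg hv.zero_nonneg hv.one_nonneg).eq_or_lt' with hzero | hpos
    · exact vertex _ v hv (by linarith [hv.zero_nonneg, hv.one_nonneg])
        (by linarith [hv.zero_nonneg, hv.one_nonneg])
    obtain ⟨k, hk⟩ := exists_floorRatio_iterate_renorm_ne_zero hv hpos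
    clear hpos
    induction k generalizing v with
    | zero => exact grow m v hm hv hk (ih hv.renorm)
    | succ k ihk => exact step _ v m.succ_pos hv (ihk hv.renorm hk)

end Renormalisation

section Existence

variable {K : ℕ} {s t w : Seq3} {v : Fin 3 → ℝ} {X Y : ℝ}

theorem lexLe_of_exists_ne_two (hw : ∀ i < K, w i = 2) (ht : ∃ i < K, t i ≠ 2) : lexLe t w := by
  obtain ⟨i, hiK, hi⟩ := ht
  refine lexLe_iff_forall_le.2 fun n hagree => ?_
  have hni : n ≤ i := le_of_not_gt fun hin => hi ((hagree i hin).trans (hw i hiK))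
  rw [hw n (hni.trans_lt hiK)]
  exact Fin.le_last _

theorem prepend_replicate_two_mem_maxSet (hs : ∀ k, ∃ i < K, s (k + i) ≠ 2) :
    prepend (List.replicate K 2 ++ [0]) s ∈ MaxSet := by
  have htwo (i : ℕ) (hi : i < K) : prepend (List.replicate K 2 ++ [0]) s i = 2 := by
    rw [prepend_append, prepend_apply_of_lt (by simpa using hi), List.getElem_replicate]
  have hK : 0 < K := (hs 0).elim fun i hi => i.zero_le.trans_lt hi.1
  refine ⟨htwo 0 hK, fun r => ?_⟩
  rcases Nat.eq_zero_or_pos r with rfl | hr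
  · exact lexLe_rfl
  refine lexLe_of_exists_ne_two htwo ?_
  rcases le_or_gt r K with hrK | hKr
  · refine ⟨K - r, by lia, ?_⟩
    rw [shift_iterate_apply, Nat.add_sub_cancel' hrK, prepend_apply_of_lt (by simp)]
    simp
  · obtain ⟨k, rfl⟩ := Nat.exists_eq_add_of_lt hKr
    obtain ⟨i, hi, hne⟩ := hs k
    refine ⟨i, hi, ?_⟩
    have hpos : K + k + 1 + i = (List.replicate K (2 : Fin 3) ++ [0]).length + (k + i) := by
      simp only [List.length_append, List.length_replicate, List.length_singleton]
      lia
    rwa [shift_iterate_apply, hpos, prepend_apply_length_add]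

theorem const_two_mem_maxSet : (fun _ => 2 : Seq3) ∈ MaxSet :=
  ⟨rfl, fun r => Or.inl (funext fun i => by rw [shift_iterate_apply])⟩

theorem hasDirection_const_two (h0 : v 0 = 0) (h1 : v 1 = 0) (h2 : v 2 ≠ 0) :
    HasDirection (fun _ => 2) v := by
  have hsum : ∑ i, v i = v 2 := by rw [Fin.sum_univ_three, h0, h1]; ring
  refine hasDirection_of_tendsto_div h2 (hsum.trans_ne h2) (g := Nat.cast) fun a => ?_
  fin_cases a
  · simp [digitCount, h0]
  · simp [digitCount, h1]
  · have hone : ∀ᶠ N : ℕ in atTop, (1 : ℝ) = (digitCount 2 (fun _ => 2) N : ℝ) / N := by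
      filter_upwards [eventually_ne_atTop 0] with N hN
      simp [digitCount, hN]
    simpa [h2] using tendsto_const_nhds.congr' hone

/-- The increments of `j ↦ ⌊X * j⌋₊`: a sequence of natural numbers of mean `X`. -/
noncomputable def floorIncrement (X : ℝ) (j : ℕ) : ℕ := ⌊X * (j + 1 : ℕ)⌋₊ - ⌊X * j⌋₊

theorem sum_floorIncrement (hX : 0 ≤ X) (J : ℕ) :
    ∑ j ∈ Finset.range J, floorIncrement X j = ⌊X * J⌋₊ := by
  have hmono : Monotone fun j : ℕ => ⌊X * j⌋₊ := fun i j hij => by dsimp only; gcongr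
  simpa [floorIncrement] using Finset.sum_range_tsub hmono J

theorem tendsto_sum_floorIncrement_div (hX : 0 ≤ X) :
    Tendsto (fun J : ℕ => ((∑ j ∈ Finset.range J, floorIncrement X j : ℕ) : ℝ) / J) atTop
      (𝓝 X) := by
  simpa only [sum_floorIncrement hX] using!
    (tendsto_nat_floor_mul_div_atTop hX).comp tendsto_natCast_atTop_atTop

theorem floorIncrement_pos (hX : 1 ≤ X) (j : ℕ) : 0 < floorIncrement X j := by
  refine Nat.sub_pos_of_lt (Nat.lt_of_succ_le ?_)
  rw [Nat.succ_eq_add_one, ← Nat.floor_add_one (by positivity)]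
  gcongr
  push_cast
  linarith

/-- Words `2ᴷ 0ᵃ 1ᵇ` in which, on average over `j`, `a` equals `X` and `b` equals `Y`. -/
noncomputable def balancedBlock (K : ℕ) (X Y : ℝ) (j : ℕ) : List (Fin 3) :=
  List.replicate K 2 ++ (List.replicate (floorIncrement X j) 0 ++
    List.replicate (floorIncrement Y j) 1)

theorem balancedBlock_ne_nil (hK : 0 < K) (j : ℕ) : balancedBlock K X Y j ≠ [] := by
  simp [balancedBlock, hK.ne']

theorem hasDirection_flatten_balancedBlock (hK : 0 < K) (hX : 0 ≤ X) (hY : 0 ≤ Y) :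
    HasDirection (flatten (balancedBlock K X Y)) ![X, Y, K] := by
  have hsum : ∑ i, ![X, Y, (K : ℝ)] i ≠ 0 := by
    have : 0 < X + Y + K := by positivity
    simpa [Fin.sum_univ_three] using this.ne'
  refine hasDirection_flatten (balancedBlock_ne_nil hK) one_ne_zero hsum fun a => ?_
  fin_cases a
  · simpa [balancedBlock, List.count_replicate] using tendsto_sum_floorIncrement_div hX
  · simpa [balancedBlock, List.count_replicate] using tendsto_sum_floorIncrement_div hY
  · have hconst : ∀ᶠ J : ℕ in atTop, (K : ℝ) = ((J * K : ℕ) : ℝ) / J := by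
      filter_upwards [eventually_ne_atTop 0] with J hJ
      push_cast
      field_simp
    simpa [balancedBlock, List.count_replicate] using tendsto_const_nhds.congr' hconst

theorem flatten_balancedBlock_exists_ne_two (hK : 0 < K) (hXY : 1 ≤ X ∨ 1 ≤ Y) (k : ℕ) :
    ∃ i < K + 1, flatten (balancedBlock K X Y) (k + i) ≠ 2 := by
  obtain ⟨j, i, hi, rfl⟩ := exists_eq_blockStart_add (balancedBlock_ne_nil (X := X) (Y := Y) hK) k
  have hne {p : ℕ} (hp : p < (balancedBlock K X Y j).length) (hKp : K ≤ p) :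
      flatten (balancedBlock K X Y) (blockStart (balancedBlock K X Y) j + p) ≠ 2 := by
    rw [flatten_blockStart_add (balancedBlock_ne_nil hK) hp]
    simp only [balancedBlock, List.getElem_append, List.getElem_replicate, List.length_replicate,
      hKp.not_gt, dite_false]
    split_ifs <;> decide
  rcases le_or_gt i K with hiK | hKi
  · have hlength : K < (balancedBlock K X Y j).length := by
      have : 0 < floorIncrement X j + floorIncrement Y j :=
        hXY.elim (fun h => Nat.add_pos_left (floorIncrement_pos h j) _)
          (fun h => Nat.add_pos_right _ (floorIncrement_pos h j))
      simpa [balancedBlock] using this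
    refine ⟨K - i, by lia, ?_⟩
    rw [add_assoc, Nat.add_sub_cancel' hiK]
    exact hne hlength le_rfl
  · exact ⟨0, K.succ_pos, hne hi hKi.le⟩

theorem HasDirection.of_smul {c : ℝ} (hc : c ≠ 0) (hs : HasDirection s (c • v)) :
    HasDirection s v := fun a => by
  simpa [HasDirection, ← Finset.mul_sum, mul_div_mul_left _ _ hc] using hs a

theorem exists_mem_maxSet_hasDirection (hv : IsAdmissible v) :
    ∃ w ∈ MaxSet, HasDirection w v := by
  rcases (hv.zero_nonneg.trans (le_max_left _ (v 1))).eq_or_lt' with hzero | hpos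
  · have h0 : v 0 = 0 := le_antisymm (hzero ▸ le_max_left _ _) hv.zero_nonneg
    have h1 : v 1 = 0 := le_antisymm (hzero ▸ le_max_right _ _) hv.one_nonneg
    exact ⟨_, const_two_mem_maxSet, hasDirection_const_two h0 h1 hv.two_pos.ne'⟩
  obtain ⟨K, hK⟩ := exists_nat_gt (v 2 / max (v 0) (v 1))
  have hKpos : 0 < K := Nat.cast_pos.1 ((div_pos hv.two_pos hpos).trans hK)
  set c : ℝ := K / v 2 with hc
  have hcpos : 0 < c := div_pos (Nat.cast_pos.2 hKpos) hv.two_pos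
  have hlarge : 1 ≤ c * v 0 ∨ 1 ≤ c * v 1 := by
    rw [← le_max_iff, ← mul_max_of_nonneg _ _ hcpos.le, hc, div_mul_eq_mul_div,
      one_le_div hv.two_pos]
    exact ((div_lt_iff₀ hpos).1 hK).le
  have hdirection := hasDirection_flatten_balancedBlock hKpos
    (mul_nonneg hcpos.le hv.zero_nonneg) (mul_nonneg hcpos.le hv.one_nonneg)
  have hscale : ![c * v 0, c * v 1, (K : ℝ)] = c • v := by
    funext i
    fin_cases i <;> simp [hc, div_mul_cancel₀ _ hv.two_pos.ne']
  exact ⟨_, prepend_replicate_two_mem_maxSet (flatten_balancedBlock_exists_ne_two hKpos hlarge),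
    ((hscale ▸ hdirection).of_smul hcpos.ne').prepend _⟩

end Existence

section Records

/-- The walk `G` stays strictly below its value at time `j` after that time. -/
def IsRecord (G : ℕ → ℤ) (j : ℕ) : Prop := ∀ k > j, G k < G j

/-- From time `J` on, the walk `G` attains its maximum at time `μ J`. -/
def IsTailArgmax (G : ℕ → ℤ) (μ : ℕ → ℕ) : Prop := ∀ J, J ≤ μ J ∧ ∀ k ≥ J, G k ≤ G (μ J)

variable {G : ℕ → ℤ} {μ : ℕ → ℕ}

theorem exists_isTailArgmax (hG : Tendsto G atTop atBot) : ∃ μ, IsTailArgmax G μ := by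
  rw [← Nat.cofinite_eq_atTop] at hG
  choose μ hμ using fun J => hG.exists_within_forall_ge (Set.nonempty_Ici (a := J))
  exact ⟨μ, hμ⟩

theorem IsTailArgmax.isRecord_iff (hμ : IsTailArgmax G μ) {J : ℕ} :
    IsRecord G J ↔ G (μ (J + 1)) < G J :=
  ⟨fun h => h _ (hμ (J + 1)).1, fun h k hk => ((hμ (J + 1)).2 k hk).trans_lt h⟩

open Classical in
theorem IsTailArgmax.count_isRecord (hμ : IsTailArgmax G μ) (hstep : ∀ j, G j ≤ G (j + 1) + 1)
    (J : ℕ) : (Nat.count (IsRecord G) J : ℤ) = G (μ 0) - G (μ J) := by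
  induction J with
  | zero => simp
  | succ J ih =>
    obtain ⟨hJμ, hmax⟩ := hμ J
    obtain ⟨hJμ', hmax'⟩ := hμ (J + 1)
    have hJ : G J ≤ G (μ J) := hmax J le_rfl
    have hmono : G (μ (J + 1)) ≤ G (μ J) := hmax _ (by lia)
    have hnext : G (J + 1) ≤ G (μ (J + 1)) := hmax' (J + 1) le_rfl
    have hattained : G (μ J) = G J ∨ G (μ J) ≤ G (μ (J + 1)) :=
      hJμ.eq_or_lt.imp (fun h => by rw [← h]) (hmax' _)
    have := hstep J
    rw [Nat.count_succ, hμ.isRecord_iff]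
    split_ifs <;> lia

theorem IsTailArgmax.tendsto_div (hμ : IsTailArgmax G μ) (hG : Tendsto G atTop atBot)
    {c : ℕ → ℕ} (hc : Monotone c) (hctop : Tendsto c atTop atTop) {x : ℝ}
    (hlim : Tendsto (fun J => (G J : ℝ) / c J) atTop (𝓝 x)) :
    Tendsto (fun J => (G (μ J) : ℝ) / c J) atTop (𝓝 x) := by
  have hμtop : Tendsto μ atTop atTop := tendsto_atTop_mono (fun J => (hμ J).1) tendsto_id
  refine tendsto_of_tendsto_of_tendsto_of_le_of_le' hlim (hlim.comp hμtop) ?_ ?_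
  · exact Eventually.of_forall fun J => div_le_div_of_nonneg_right
      (Int.cast_le.2 ((hμ J).2 J le_rfl)) (Nat.cast_nonneg _)
  · filter_upwards [(hG.comp hμtop).eventually_le_atBot 0, hctop.eventually_gt_atTop 0]
      with J hneg hpos
    have hinv : (c (μ J) : ℝ)⁻¹ ≤ (c J : ℝ)⁻¹ :=
      inv_anti₀ (Nat.cast_pos.2 hpos) (Nat.cast_le.2 (hc (hμ J).1))
    simpa only [div_eq_mul_inv] using! mul_le_mul_of_nonpos_left hinv (Int.cast_nonpos.2 hneg)

open Classical in
theorem tendsto_count_isRecord_div (hstep : ∀ j, G j ≤ G (j + 1) + 1)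
    {c : ℕ → ℕ} (hc : Monotone c) (hctop : Tendsto c atTop atTop) {x : ℝ} (hx : x < 0)
    (hlim : Tendsto (fun J => (G J : ℝ) / c J) atTop (𝓝 x)) :
    Tendsto (fun J => (Nat.count (IsRecord G) J : ℝ) / c J) atTop (𝓝 (-x)) := by
  have hctop' : Tendsto (fun J => (c J : ℝ)) atTop atTop := tendsto_natCast_atTop_iff.2 hctop
  have hG : Tendsto G atTop atBot := by
    refine tendsto_intCast_atBot_iff.1 ((hlim.neg_mul_atTop hx hctop').congr' ?_)
    filter_upwards [hctop.eventually_ne_atTop 0] with J hJ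
    exact div_mul_cancel₀ _ (Nat.cast_ne_zero.2 hJ)
  obtain ⟨μ, hμ⟩ := exists_isTailArgmax hG
  have hdiff := (hctop'.const_div_atTop (G (μ 0) : ℝ)).sub (hμ.tendsto_div hG hc hctop hlim)
  rw [zero_sub] at hdiff
  refine hdiff.congr fun J => ?_
  rw [← sub_div, ← Int.cast_sub, ← hμ.count_isRecord hstep, Int.cast_natCast]

end Records

section NonzeroPositions

/-- The position of the `j`-th nonzero digit of `s`; only meaningful when there are infinitely
many of them. -/
noncomputable def nonzeroPos (s : Seq3) (j : ℕ) : ℕ := Nat.nth (s · ≠ 0) j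

/-- The number of zeros following the `j`-th nonzero digit of `s`. -/
noncomputable def zeroRun (s : Seq3) (j : ℕ) : ℕ := nonzeroPos s (j + 1) - nonzeroPos s j - 1

variable {s : Seq3} {v : Fin 3 → ℝ}

theorem HasDirection.infinite_eq_two (hs : HasDirection s v) (hv : IsAdmissible v) :
    {i | s i = 2}.Infinite := by
  intro hfin
  obtain ⟨B, hB⟩ := hfin.bddAbove
  have hbound (N : ℕ) : digitCount 2 s N ≤ B + 1 := by
    induction N with
    | zero => simp [digitCount_zero]
    | succ N ih =>
      rcases le_or_gt N B with hN | hN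
      · exact (Nat.count_le _).trans (Nat.succ_le_succ hN)
      · rw [digitCount_succ, if_neg fun h : s N = 2 => hN.not_ge (hB h)]
        exact ih
  have hzero : Tendsto (fun N : ℕ => (digitCount 2 s N : ℝ) / N) atTop (𝓝 0) :=
    squeeze_zero (fun N => by positivity)
      (fun N => div_le_div_of_nonneg_right (Nat.cast_le.2 (hbound N)) (Nat.cast_nonneg N))
      (tendsto_const_div_atTop_nhds_zero_nat _)
  exact (div_pos hv.two_pos hv.sum_pos).ne' (tendsto_nhds_unique (hs 2) hzero)

theorem HasDirection.infinite_ne_zero (hs : HasDirection s v) (hv : IsAdmissible v) :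
    {i | s i ≠ 0}.Infinite :=
  (hs.infinite_eq_two hv).mono fun i (hi : s i = 2) => by simp [hi]

theorem apply_eq_zero_of_lt_nonzeroPos_zero {i : ℕ} (hi : i < nonzeroPos s 0) : s i = 0 := by
  by_contra h
  have hexists : ∃ i, s i ≠ 0 := ⟨i, h⟩
  rw [nonzeroPos, Nat.nth_zero_of_exists hexists] at hi
  exact Nat.find_min hexists hi h

theorem digitCount_nonzeroPos_zero {a : Fin 3} (ha : a ≠ 0) :
    digitCount a s (nonzeroPos s 0) = 0 :=
  Nat.count_of_forall_not fun _ hi h =>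
    ha (h.symm.trans (apply_eq_zero_of_lt_nonzeroPos_zero hi))

section

variable (hinf : {i | s i ≠ 0}.Infinite)
include hinf

theorem strictMono_nonzeroPos : StrictMono (nonzeroPos s) := Nat.nth_strictMono hinf

theorem apply_nonzeroPos_ne_zero (j : ℕ) : s (nonzeroPos s j) ≠ 0 :=
  Nat.nth_mem_of_infinite hinf j

theorem nonzeroPos_succ (j : ℕ) : nonzeroPos s (j + 1) = nonzeroPos s j + (zeroRun s j + 1) := by
  have := strictMono_nonzeroPos hinf j.lt_succ_self
  rw [zeroRun]
  lia

theorem apply_nonzeroPos_add_eq_zero {i j : ℕ} (hi : i < zeroRun s j) :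
    s (nonzeroPos s j + (i + 1)) = 0 := by
  by_contra h
  have := Nat.le_nth_of_lt_nth_succ (p := (s · ≠ 0)) (k := j)
    (show nonzeroPos s j + (i + 1) < nonzeroPos s (j + 1) by rw [nonzeroPos_succ hinf]; lia) h
  change _ ≤ nonzeroPos s j at this
  lia

theorem shift_iterate_nonzeroPos (j : ℕ) :
    shift^[nonzeroPos s j] s = prepend (s (nonzeroPos s j) :: List.replicate (zeroRun s j) 0)
      (shift^[nonzeroPos s (j + 1)] s) := by
  funext i
  rw [shift_iterate_apply]
  rcases Nat.lt_or_ge i (zeroRun s j + 1) with hi | hi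
  · rw [prepend_apply_of_lt (by simpa using hi)]
    cases i with
    | zero => rfl
    | succ i =>
      simpa using apply_nonzeroPos_add_eq_zero hinf (by lia)
  · obtain ⟨k, rfl⟩ := Nat.exists_eq_add_of_le hi
    have hlength : zeroRun s j + 1 =
      (s (nonzeroPos s j) :: List.replicate (zeroRun s j) 0).length := by simp
    rw [← add_assoc, ← nonzeroPos_succ hinf, hlength, prepend_apply_length_add, shift_iterate_apply]

theorem digitCount_nonzeroPos_succ (a : Fin 3) (j : ℕ) :
    digitCount a s (nonzeroPos s (j + 1)) = digitCount a s (nonzeroPos s j) +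
      (s (nonzeroPos s j) :: List.replicate (zeroRun s j) 0).count a := by
  conv_lhs => rw [nonzeroPos_succ hinf, digitCount_add, shift_iterate_nonzeroPos hinf]
  rw [← digitCount_length_prepend a _ (shift^[nonzeroPos s (j + 1)] s)]
  simp

end

end NonzeroPositions

section Desubstitution

/-- The number of zeros minus `n + 1` times the number of twos before the `J`-th nonzero digit. -/
noncomputable def excess (n : ℕ) (s : Seq3) (J : ℕ) : ℤ :=
  digitCount 0 s (nonzeroPos s J) - (n + 1) * digitCount 2 s (nonzeroPos s J)

open Classical in
/-- The sequence obtained from `s` by reading each block `1` as `0`, and each block consisting of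
a `2` and the zeros following it as `2` or `1`, according to whether the excess has a record there.
-/
noncomputable def desubstitution (n : ℕ) (s : Seq3) : Seq3 := fun j =>
  if s (nonzeroPos s j) = 1 then 0 else if IsRecord (excess n s) j then 2 else 1

variable {n j : ℕ} {s u : Seq3} {v : Fin 3 → ℝ}

section

variable (hinf : {i | s i ≠ 0}.Infinite)
include hinf

theorem apply_nonzeroPos_eq_one_or_two (j : ℕ) :
    s (nonzeroPos s j) = 1 ∨ s (nonzeroPos s j) = 2 := by
  have := apply_nonzeroPos_ne_zero hinf j
  lia

theorem excess_succ_of_one (h : s (nonzeroPos s j) = 1) :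
    excess n s (j + 1) = excess n s j + zeroRun s j := by
  simp [excess, digitCount_nonzeroPos_succ hinf, h, List.count_replicate]
  ring

theorem excess_succ_of_two (h : s (nonzeroPos s j) = 2) :
    excess n s (j + 1) = excess n s j + zeroRun s j - (n + 1) := by
  simp [excess, digitCount_nonzeroPos_succ hinf, h, List.count_replicate]
  ring

theorem not_isRecord_of_one (h : s (nonzeroPos s j) = 1) : ¬ IsRecord (excess n s) j := by
  intro hrecord
  have := hrecord (j + 1) j.lt_succ_self
  rw [excess_succ_of_one hinf h] at this
  lia

theorem desubstitution_eq_two_iff : desubstitution n s j = 2 ↔ IsRecord (excess n s) j := by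
  rw [desubstitution]
  split_ifs with hone hrecord
  · simpa using not_isRecord_of_one hinf hone
  · simpa using hrecord
  · simpa using hrecord

open Classical in
theorem digitCount_two_desubstitution (J : ℕ) :
    digitCount 2 (desubstitution n s) J = Nat.count (IsRecord (excess n s)) J := by
  induction J with
  | zero => rw [digitCount_zero, Nat.count_zero]
  | succ J ih => simp only [digitCount_succ, Nat.count_succ, ih, desubstitution_eq_two_iff hinf]

theorem digitCount_zero_desubstitution (J : ℕ) :
    digitCount 0 (desubstitution n s) J = digitCount 1 s (nonzeroPos s J) := by
  induction J with
  | zero => rw [digitCount_zero, digitCount_nonzeroPos_zero (by decide)]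
  | succ J ih =>
    rw [digitCount_succ, ih, digitCount_nonzeroPos_succ hinf, desubstitution]
    rcases apply_nonzeroPos_eq_one_or_two hinf J with h | h
    · simp [h, List.count_replicate]
    · simp [h, List.count_replicate, apply_ite (· = (0 : Fin 3))]

theorem digitCount_one_add_digitCount_two_desubstitution (J : ℕ) :
    digitCount 1 (desubstitution n s) J + digitCount 2 (desubstitution n s) J =
      digitCount 2 s (nonzeroPos s J) := by
  induction J with
  | zero => simp only [digitCount_zero, digitCount_nonzeroPos_zero (by decide : (2 : Fin 3) ≠ 0)]
  | succ J ih =>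
    rw [digitCount_nonzeroPos_succ hinf, ← ih, digitCount_succ, digitCount_succ, desubstitution]
    rcases apply_nonzeroPos_eq_one_or_two hinf J with h | h
    · simp [h, List.count_replicate]
    · by_cases hrecord : IsRecord (excess n s) J <;> simp [h, List.count_replicate, hrecord]
      <;> ring

theorem tendsto_digitCount_nonzeroPos_div (hs : HasDirection s v) (a : Fin 3) :
    Tendsto (fun J => (digitCount a s (nonzeroPos s J) : ℝ) / nonzeroPos s J) atTop
      (𝓝 (v a / ∑ i, v i)) :=
  (hs a).comp (strictMono_nonzeroPos hinf).tendsto_atTop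

theorem le_excess_succ_add_one (hrun : ∀ j, s (nonzeroPos s j) = 2 → n ≤ zeroRun s j) (j : ℕ) :
    excess n s j ≤ excess n s (j + 1) + 1 := by
  rcases apply_nonzeroPos_eq_one_or_two hinf j with h | h
  · rw [excess_succ_of_one hinf h]
    lia
  · have := hrun j h
    rw [excess_succ_of_two hinf h]
    lia

theorem tendsto_excess_floorRatio_div (hs : HasDirection s v) :
    Tendsto (fun J => (excess (floorRatio v) s J : ℝ) / nonzeroPos s J) atTop
      (𝓝 (-(renorm v 2 / ∑ i, v i))) := by
  have hcount := tendsto_digitCount_nonzeroPos_div hinf hs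
  have hlim := (hcount 0).sub ((hcount 2).const_mul ((floorRatio v : ℝ) + 1))
  have hval : v 0 / ∑ i, v i - (floorRatio v + 1) * (v 2 / ∑ i, v i) =
      -(renorm v 2 / ∑ i, v i) := by simp [renorm]; ring
  rw [hval] at hlim
  refine hlim.congr fun J => ?_
  simp only [excess]
  push_cast
  ring

theorem tendsto_digitCount_two_desubstitution_div (hv : IsAdmissible v) (hs : HasDirection s v)
    (hrun : ∀ j, s (nonzeroPos s j) = 2 → floorRatio v ≤ zeroRun s j) :
    Tendsto (fun J => (digitCount 2 (desubstitution (floorRatio v) s) J : ℝ) / nonzeroPos s J)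
      atTop (𝓝 (renorm v 2 / ∑ i, v i)) := by
  simp only [digitCount_two_desubstitution hinf]
  rw [← neg_neg (renorm v 2 / _)]
  exact tendsto_count_isRecord_div (le_excess_succ_add_one hinf hrun)
    (strictMono_nonzeroPos hinf).monotone (strictMono_nonzeroPos hinf).tendsto_atTop
    (neg_neg_of_pos (div_pos hv.renorm.two_pos hv.sum_pos)) (tendsto_excess_floorRatio_div hinf hs)

end

theorem hasDirection_desubstitution (hv : IsAdmissible v) (hs : HasDirection s v)
    (hrun : ∀ j, s (nonzeroPos s j) = 2 → floorRatio v ≤ zeroRun s j) :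
    HasDirection (desubstitution (floorRatio v) s) (renorm v) := by
  have hinf := hs.infinite_ne_zero hv
  have hcount := tendsto_digitCount_nonzeroPos_div hinf hs
  have htwo := tendsto_digitCount_two_desubstitution_div hinf hv hs hrun
  refine hasDirection_of_tendsto_div (g := fun J => (nonzeroPos s J : ℝ)) hv.sum_pos.ne'
    hv.renorm.sum_pos.ne' fun a => ?_
  fin_cases a
  · refine (hcount 1).congr fun J => ?_
    rw [← digitCount_zero_desubstitution hinf (n := floorRatio v)]
    rfl
  · have hone := (hcount 2).sub htwo
    have hval : v 2 / ∑ i, v i - renorm v 2 / ∑ i, v i = renorm v 1 / ∑ i, v i := by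
      simp [renorm]; ring
    rw [hval] at hone
    refine hone.congr fun J => ?_
    rw [← digitCount_one_add_digitCount_two_desubstitution hinf (n := floorRatio v) J]
    push_cast
    ring
  · exact htwo

/-- The excess of `s` at its `j`-th nonzero digit is never exceeded later on. -/
def IsExcessPeak (n : ℕ) (s : Seq3) (j : ℕ) : Prop := ∀ k ≥ j, excess n s k ≤ excess n s j

-- The first block `2 0ⁿ` after a peak which is not a record is read as `1`, whose image `2 0ⁿ⁺¹`
-- is lexicographically smaller; up to that point the blocks of `s` are reproduced exactly.
theorem IsExcessPeak.block_desubstitution (hinf : {i | s i ≠ 0}.Infinite)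
    (hrun : ∀ j, s (nonzeroPos s j) = 2 → n ≤ zeroRun s j) (hpeak : IsExcessPeak n s j) :
    (s (nonzeroPos s j) :: List.replicate (zeroRun s j) 0 = block n (desubstitution n s j) ∧
        IsExcessPeak n s (j + 1)) ∨
      (s (nonzeroPos s j) = 2 ∧ zeroRun s j = n ∧ desubstitution n s j = 1) := by
  have hsucc := hpeak (j + 1) j.le_succ
  have hnext (heq : excess n s (j + 1) = excess n s j) : IsExcessPeak n s (j + 1) :=
    fun k hk => heq ▸ hpeak k (by lia)
  rcases apply_nonzeroPos_eq_one_or_two hinf j with hone | htwo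
  · have hstep := excess_succ_of_one (n := n) hinf hone
    have hzero : zeroRun s j = 0 := by lia
    exact .inl ⟨by simp [hone, hzero, desubstitution, block], hnext (by lia)⟩
  · have hstep := excess_succ_of_two (n := n) hinf htwo
    have hlow := hrun j htwo
    by_cases hrecord : IsRecord (excess n s) j
    · have hlt := hrecord (j + 1) j.lt_succ_self
      have hn : zeroRun s j = n := by lia
      refine .inl ⟨by simp [htwo, hn, desubstitution, hrecord, block], fun k hk => ?_⟩
      have := hrecord k hk
      lia
    · have hdesub : desubstitution n s j = 1 := by simp [desubstitution, htwo, hrecord]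
      rcases hlow.eq_or_lt with hn | hn
      · exact .inr ⟨htwo, hn.symm, hdesub⟩
      · have hn' : zeroRun s j = n + 1 := by lia
        exact .inl ⟨by simp [htwo, hn', hdesub, block], hnext (by lia)⟩

theorem IsExcessPeak.substitution_desubstitution_lexLe (hinf : {i | s i ≠ 0}.Infinite)
    (hrun : ∀ j, s (nonzeroPos s j) = 2 → n ≤ zeroRun s j) (hpeak : IsExcessPeak n s j) :
    lexLe (substitution n (shift^[j] (desubstitution n s))) (shift^[nonzeroPos s j] s) := by
  refine lexLe_coinduction (fun a b => ∃ j, IsExcessPeak n s j ∧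
    a = substitution n (shift^[j] (desubstitution n s)) ∧ b = shift^[nonzeroPos s j] s)
    ?_ ⟨j, hpeak, rfl, rfl⟩
  rintro _ _ ⟨j, hpeak, rfl, rfl⟩
  rw [substitution_eq_prepend, shift_iterate_apply, add_zero, ← Function.iterate_succ_apply' shift,
    shift_iterate_nonzeroPos hinf]
  rcases hpeak.block_desubstitution hinf hrun with ⟨hblock, hnext⟩ | ⟨htwo, hn, hdesub⟩
  · rw [hblock]
    exact .inr ⟨_, block_ne_nil n _, _, _, rfl, rfl, j + 1, hnext, rfl, rfl⟩
  · rw [htwo, hn, hdesub]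
    refine .inl (prepend_two_replicate_lexLe n.lt_succ_self ?_)
    rw [shift_iterate_apply, add_zero]
    exact apply_nonzeroPos_ne_zero hinf _

theorem exists_substitution_lexLe_shift (hv : IsAdmissible v) (hs : HasDirection s v)
    (hu : u 0 = 2) (h : ∀ t, HasDirection t (renorm v) → ∃ j, lexLe u (shift^[j] t)) :
    ∃ r, lexLe (substitution (floorRatio v) u) (shift^[r] s) := by
  have hinf := hs.infinite_ne_zero hv
  by_cases hrun : ∀ j, s (nonzeroPos s j) = 2 → floorRatio v ≤ zeroRun s j
  · obtain ⟨j, hj⟩ := h _ (hasDirection_desubstitution hv hs hrun)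
    have hhead := lexLe_iff_forall_le.1 hj 0 fun i hi => absurd hi i.not_lt_zero
    rw [hu, shift_iterate_apply, add_zero] at hhead
    have hrecord := (desubstitution_eq_two_iff hinf).1 (le_antisymm (Fin.le_last _) hhead)
    have hpeak : IsExcessPeak (floorRatio v) s j := fun k hk =>
      hk.eq_or_lt.elim (fun hjk => by rw [hjk]) fun hjk => (hrecord k hjk).le
    exact ⟨nonzeroPos s j, lexLe_trans (substitution_lexLe_substitution _ hj)
      (hpeak.substitution_desubstitution_lexLe hinf hrun)⟩
  · push Not at hrun
    obtain ⟨j, htwo, hshort⟩ := hrun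
    refine ⟨nonzeroPos s j, ?_⟩
    rw [shift_iterate_nonzeroPos hinf, htwo, substitution_eq_prepend, hu]
    refine prepend_two_replicate_lexLe hshort ?_
    rw [shift_iterate_apply, add_zero]
    exact apply_nonzeroPos_ne_zero hinf _

end Desubstitution

section InfimaxSequences

/-- The first `m` digits of `u` are a prefix of the infimax sequence of the direction `v`: they are
attained by a maximal sequence of direction `v`, and every sequence of direction `v` has a shift
which is at least the least sequence starting with them. -/
structure IsInfimaxPrefix (v : Fin 3 → ℝ) (u : Seq3) (m : ℕ) : Prop where
  exists_mem_cylinder : ∃ w ∈ MaxSet, HasDirection w v ∧ w ∈ PiNat.cylinder u m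
  exists_truncate_lexLe : ∀ s, HasDirection s v → ∃ r, lexLe (truncate u m) (shift^[r] s)

/-- The infimax sequence of the direction `v`, characterised by its prefixes. -/
def IsInfimaxSeq (v : Fin 3 → ℝ) (I : Seq3) : Prop := ∀ m, IsInfimaxPrefix v I m

variable {k m : ℕ} {s u u' w I J : Seq3} {v : Fin 3 → ℝ}

theorem exists_cylinder_const_two (hs : HasDirection s v) (h0 : v 0 = 0) (h1 : v 1 = 0)
    (h2 : v 2 ≠ 0) (m : ℕ) : ∃ r, shift^[r] s ∈ PiNat.cylinder (fun _ => 2 : Seq3) m := by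
  rcases m.eq_zero_or_pos with rfl | hm
  · exact ⟨0, fun i hi => absurd hi i.not_lt_zero⟩
  by_contra! hgap
  have hwindow (r : ℕ) : digitCount 2 (shift^[r] s) m < m := by
    refine (Nat.count_le _).lt_of_ne fun heq => hgap r fun i hi => ?_
    exact Nat.count_iff_forall.1 heq i hi
  have hcount (k : ℕ) : digitCount 2 s (k * m) + k ≤ k * m := by
    induction k with
    | zero => simp [digitCount_zero]
    | succ k ih =>
      have := hwindow (k * m)
      rw [Nat.succ_mul, digitCount_add]
      lia
  have hlim : Tendsto (fun k : ℕ => (digitCount 2 s (k * m) : ℝ) / (k * m : ℕ)) atTop (𝓝 1) := by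
    have htwo := hs 2
    rw [Fin.sum_univ_three, h0, h1, zero_add, zero_add, div_self h2] at htwo
    exact htwo.comp (tendsto_id.atTop_mul_const' hm)
  have hbound : ∀ᶠ k : ℕ in atTop, (digitCount 2 s (k * m) : ℝ) / (k * m : ℕ) ≤ 1 - 1 / m := by
    filter_upwards [eventually_gt_atTop 0] with k hk
    have hle : (digitCount 2 s (k * m) : ℝ) + k ≤ k * m := mod_cast hcount k
    rw [div_le_iff₀ (mod_cast Nat.mul_pos hk hm)]
    have hm' : (m : ℝ) ≠ 0 := Nat.cast_ne_zero.2 hm.ne'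
    push_cast
    field_simp
    linarith
  have hpos : (0 : ℝ) < 1 / m := by positivity
  linarith [le_of_tendsto hlim hbound]

namespace IsInfimaxPrefix

theorem mono (h : IsInfimaxPrefix v u m) (hkm : k ≤ m) : IsInfimaxPrefix v u k where
  exists_mem_cylinder :=
    let ⟨w, hw, hdir, hcyl⟩ := h.exists_mem_cylinder
    ⟨w, hw, hdir, PiNat.cylinder_anti u hkm hcyl⟩
  exists_truncate_lexLe s hs :=
    let ⟨r, hr⟩ := h.exists_truncate_lexLe s hs
    ⟨r, lexLe_trans (truncate_lexLe_of_mem_cylinder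
      (PiNat.cylinder_anti u hkm (truncate_mem_cylinder u m))) hr⟩

theorem congr (h : IsInfimaxPrefix v u m) (hu : u' ∈ PiNat.cylinder u m) :
    IsInfimaxPrefix v u' m := by
  rw [PiNat.mem_cylinder_iff_eq] at hu
  refine ⟨by rw [hu]; exact h.exists_mem_cylinder, fun s hs => ?_⟩
  obtain ⟨r, hr⟩ := h.exists_truncate_lexLe s hs
  refine ⟨r, lexLe_trans (truncate_lexLe_of_mem_cylinder ?_) hr⟩
  rw [hu]
  exact truncate_mem_cylinder u m

theorem zero_eq_two (h : IsInfimaxPrefix v u m) (hm : 1 ≤ m) : u 0 = 2 := by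
  obtain ⟨w, hw, -, hcyl⟩ := h.exists_mem_cylinder
  rw [← hcyl 0 hm, hw.1]

theorem truncate_lexLe (h : IsInfimaxPrefix v u m) (hw : w ∈ MaxSet) (hdir : HasDirection w v) :
    lexLe (truncate u m) w :=
  let ⟨r, hr⟩ := h.exists_truncate_lexLe w hdir
  lexLe_trans hr (hw.2 r)

theorem mem_cylinder (h : IsInfimaxPrefix v u m) (h' : IsInfimaxPrefix v u' m) :
    u' ∈ PiNat.cylinder u m := by
  obtain ⟨w, hw, hdir, hcyl⟩ := h.exists_mem_cylinder
  obtain ⟨w', hw', hdir', hcyl'⟩ := h'.exists_mem_cylinder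
  rw [PiNat.mem_cylinder_iff_eq] at hcyl hcyl' ⊢
  rcases lexLe_total w w' with hle | hle
  · have := mem_cylinder_of_lexLe_of_lexLe (h'.truncate_lexLe hw hdir) hle
      (PiNat.mem_cylinder_iff_eq.2 hcyl')
    rw [← hcyl, ← PiNat.mem_cylinder_iff_eq.1 this]
  · have := mem_cylinder_of_lexLe_of_lexLe (h.truncate_lexLe hw' hdir') hle
      (PiNat.mem_cylinder_iff_eq.2 hcyl)
    rw [← hcyl', PiNat.mem_cylinder_iff_eq.1 this]

theorem substitution (hv : IsAdmissible v) (h : IsInfimaxPrefix (renorm v) u m) (hm : 1 ≤ m) :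
    IsInfimaxPrefix v (substitution (floorRatio v) u)
      (blockStart (blocks (floorRatio v) u) m) where
  exists_mem_cylinder :=
    let ⟨w, hw, hdir, hcyl⟩ := h.exists_mem_cylinder
    ⟨_, substitution_mem_maxSet _ hw, hdir.substitution_floorRatio hv,
      substitution_mem_cylinder hcyl⟩
  exists_truncate_lexLe s hs := by
    have hhead : truncate u m 0 = 2 := by
      rw [truncate_mem_cylinder u m 0 hm, h.zero_eq_two hm]
    obtain ⟨r, hr⟩ := exists_substitution_lexLe_shift hv hs hhead h.exists_truncate_lexLe
    exact ⟨r, lexLe_trans (truncate_lexLe_of_mem_cylinder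
      (substitution_mem_cylinder (truncate_mem_cylinder u m))) hr⟩

end IsInfimaxPrefix

theorem isInfimaxPrefix_one (hv : IsAdmissible v) (hw : w ∈ MaxSet) (hdir : HasDirection w v) :
    IsInfimaxPrefix v w 1 where
  exists_mem_cylinder := ⟨w, hw, hdir, PiNat.self_mem_cylinder w 1⟩
  exists_truncate_lexLe s hs := by
    obtain ⟨r, hr⟩ := (hs.infinite_eq_two hv).nonempty
    refine ⟨r, truncate_lexLe_of_mem_cylinder fun i hi => ?_⟩
    rw [Nat.lt_one_iff.1 hi, shift_iterate_apply, hw.1]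
    exact hr

theorem isInfimaxSeq_const_two (h0 : v 0 = 0) (h1 : v 1 = 0) (h2 : v 2 ≠ 0) :
    IsInfimaxSeq v fun _ => 2 := fun m =>
  { exists_mem_cylinder :=
      ⟨_, const_two_mem_maxSet, hasDirection_const_two h0 h1 h2, PiNat.self_mem_cylinder _ m⟩
    exists_truncate_lexLe := fun _ hs =>
      (exists_cylinder_const_two hs h0 h1 h2 m).imp fun _ => truncate_lexLe_of_mem_cylinder }

theorem le_blockStart_blocks (n : ℕ) (u : Seq3) (m : ℕ) : m ≤ blockStart (blocks n u) m :=
  (strictMono_blockStart (blocks_ne_nil n u)).le_apply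

theorem lt_blockStart_blocks {n : ℕ} (hn : n ≠ 0) (hu : u 0 = 2) (hm : 1 ≤ m) :
    m < blockStart (blocks n u) m := by
  have hone : blockStart (blocks n u) 1 = n + 1 := by
    simp [blockStart_succ, blockStart_zero, blocks, block, hu]
  have hle := (strictMono_blockStart (blocks_ne_nil n u)).add_le_nat (m - 1) 1
  rw [Nat.sub_add_cancel hm] at hle
  lia

theorem exists_isInfimaxPrefix (hv : IsAdmissible v) (hm : 1 ≤ m) :
    ∃ u, IsInfimaxPrefix v u m := by
  refine renorm_induction (F := fun m v => ∃ u, IsInfimaxPrefix v u m) ?_ ?_ ?_ ?_ hm hv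
  · intro v hv
    obtain ⟨w, hw, hdir⟩ := exists_mem_maxSet_hasDirection hv
    exact ⟨w, isInfimaxPrefix_one hv hw hdir⟩
  · exact fun m v hv h0 h1 => ⟨_, isInfimaxSeq_const_two h0 h1 hv.two_pos.ne' m⟩
  · rintro m v hm hv ⟨u, hu⟩
    exact ⟨_, (hu.substitution hv hm).mono (le_blockStart_blocks _ u m)⟩
  · rintro m v hm hv hn ⟨u, hu⟩
    exact ⟨_, (hu.substitution hv hm).mono (lt_blockStart_blocks hn (hu.zero_eq_two hm) hm)⟩

theorem exists_isInfimaxSeq (hv : IsAdmissible v) : ∃ I, IsInfimaxSeq v I := by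
  choose u hu using fun m => exists_isInfimaxPrefix hv (Nat.succ_pos m)
  refine ⟨fun i => u i i, fun m => ((hu m).mono m.le_succ).congr fun i hi => ?_⟩
  exact ((hu m).mono (Nat.succ_le_succ hi.le)).mem_cylinder (hu i) i i.lt_succ_self

namespace IsInfimaxSeq

theorem unique (hI : IsInfimaxSeq v I) (hJ : IsInfimaxSeq v J) : I = J :=
  funext fun i => (hJ (i + 1)).mem_cylinder (hI (i + 1)) i i.lt_succ_self

theorem substitution (hv : IsAdmissible v) (hJ : IsInfimaxSeq (renorm v) J) :
    IsInfimaxSeq v (substitution (floorRatio v) J) := fun m =>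
  ((hJ (m + 1)).substitution hv m.succ_pos).mono (m.le_succ.trans (le_blockStart_blocks _ J _))

theorem exists_eq_substitution (hv : IsAdmissible v) (hI : IsInfimaxSeq v I) :
    ∃ J, IsInfimaxSeq (renorm v) J ∧ I = Infimax.substitution (floorRatio v) J :=
  let ⟨J, hJ⟩ := exists_isInfimaxSeq hv.renorm
  ⟨J, hJ, hI.unique (hJ.substitution hv)⟩

end IsInfimaxSeq

theorem isInfimaxSeq_of_isInfimax (hv : v ∈ Delta') (hI : IsInfimax v I) : IsInfimaxSeq v I := by
  obtain ⟨⟨hnonneg, hsum⟩, htwo⟩ := hv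
  obtain ⟨J, hJ⟩ := exists_isInfimaxSeq ⟨hnonneg 0, hnonneg 1, htwo⟩
  simp only [IsInfimax, hasFreq_iff_hasDirection ((Fin.sum_univ_three v).trans hsum)] at hI
  obtain ⟨-, -, hlower, hgreatest⟩ := hI
  have heq : I = J := by
    funext i
    obtain ⟨w, hw, hdir, hcyl⟩ := (hJ (i + 1)).exists_mem_cylinder
    have hle : lexLe (truncate J (i + 1)) I :=
      hgreatest _ fun w hw => (hJ (i + 1)).truncate_lexLe hw.1 hw.2
    exact mem_cylinder_of_lexLe_of_lexLe hle (hlower w ⟨hw, hdir⟩) hcyl i i.lt_succ_self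
  exact heq ▸ hJ

end InfimaxSequences

section AlmostPeriodicity

variable {m n : ℕ} {w I : Seq3} {v : Fin 3 → ℝ}

theorem HasBoundedGaps.substitution {A : Set Seq3} (hA : HasBoundedGaps {k | shift^[k] w ∈ A})
    (n : ℕ) : HasBoundedGaps {k | shift^[k] (substitution n w) ∈ substitution n '' A} := by
  have hstep (j : ℕ) : blockStart (blocks n w) (j + 1) ≤ blockStart (blocks n w) j + (n + 2) := by
    rw [blockStart_succ]
    exact Nat.add_le_add_left (length_block_le n (w j)) _
  refine (hA.image blockStart_zero (strictMono_blockStart (blocks_ne_nil n w)) hstep).mono ?_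
  rintro _ ⟨j, hj, rfl⟩
  exact ⟨_, hj, (shift_iterate_substitution n w j).symm⟩

theorem HasBoundedGaps.substitution_cylinder
    (h : HasBoundedGaps {k | shift^[k] w ∈ PiNat.cylinder w m}) {m' : ℕ}
    (hm' : m' ≤ blockStart (blocks n w) m) :
    HasBoundedGaps {k | shift^[k] (Infimax.substitution n w) ∈
      PiNat.cylinder (Infimax.substitution n w) m'} := by
  refine (h.substitution n).mono ?_
  rintro k ⟨w', hw', hk⟩
  have hmem := PiNat.cylinder_anti _ hm' (substitution_mem_cylinder (n := n) hw')
  rwa [hk] at hmem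

namespace IsInfimaxSeq

theorem hasBoundedGaps_cylinder_one (hv : IsAdmissible v) (hI : IsInfimaxSeq v I) :
    HasBoundedGaps {k | shift^[k] I ∈ PiNat.cylinder I 1} := by
  have hhead := (hI 1).zero_eq_two le_rfl
  obtain ⟨J, hJ, rfl⟩ := hI.exists_eq_substitution hv
  obtain ⟨K, -, rfl⟩ := hJ.exists_eq_substitution hv.renorm
  have huniv : HasBoundedGaps {k | shift^[k] K ∈ Set.univ} := hasBoundedGaps_univ
  refine ((huniv.substitution (floorRatio (renorm v))).substitution (floorRatio v)).mono ?_
  rintro k ⟨_, ⟨w, -, rfl⟩, hk⟩ i hi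
  rw [Nat.lt_one_iff.1 hi, hhead, ← hk]
  exact substitution_zero_of_ne_zero (substitution_zero_ne_zero _ w)

theorem hasBoundedGaps_cylinder (hv : IsAdmissible v) (hI : IsInfimaxSeq v I) (hm : 1 ≤ m) :
    HasBoundedGaps {k | shift^[k] I ∈ PiNat.cylinder I m} := by
  revert I
  refine renorm_induction (F := fun m v => ∀ {I}, IsInfimaxSeq v I →
    HasBoundedGaps {k | shift^[k] I ∈ PiNat.cylinder I m}) ?_ ?_ ?_ ?_ hm hv
  · exact fun v hv _ hI => hI.hasBoundedGaps_cylinder_one hv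
  · intro m v hv h0 h1 I hI
    obtain rfl := hI.unique (isInfimaxSeq_const_two h0 h1 hv.two_pos.ne')
    exact hasBoundedGaps_univ.mono fun k _ i _ => shift_iterate_apply k _ i
  · intro m v _ hv ih I hI
    obtain ⟨J, hJ, rfl⟩ := hI.exists_eq_substitution hv
    exact (ih hJ).substitution_cylinder (le_blockStart_blocks _ J m)
  · intro m v hm hv hn ih I hI
    obtain ⟨J, hJ, rfl⟩ := hI.exists_eq_substitution hv
    exact (ih hJ).substitution_cylinder (lt_blockStart_blocks hn ((hJ m).zero_eq_two hm) hm)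

theorem hasBoundedGaps_of_mem_nhds (hv : IsAdmissible v) (hI : IsInfimaxSeq v I) {U : Set Seq3}
    (hU : U ∈ 𝓝 I) : HasBoundedGaps {k | shift^[k] I ∈ U} := by
  obtain ⟨_, ⟨w, m, rfl⟩, hIw, hwU⟩ :=
    (PiNat.isTopologicalBasis_cylinders fun _ => Fin 3).mem_nhds_iff.1 hU
  rw [PiNat.mem_cylinder_iff_eq] at hIw
  refine (hI.hasBoundedGaps_cylinder hv m.succ_pos).mono fun k hk => hwU ?_
  rw [← hIw]
  exact PiNat.cylinder_anti I m.le_succ hk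

end IsInfimaxSeq

end AlmostPeriodicity

end Infimax

/-- For every `α ∈ Δ'`, the infimax sequence `I(α)` is almost periodic
under the shift (return times to any neighborhood have bounded gaps), and consequently
`C_α`, the closure of its orbit, is a minimal set: every point of `C_α` has dense
forward orbit in `C_α`. -/
theorem stmt14 (α : Fin 3 → ℝ) (hα : α ∈ Delta') (Iα : Seq3) (hI : IsInfimax α Iα) :
    (∀ U ∈ nhds Iα, ∃ N : ℕ, 0 < N ∧ ∀ r : ℕ, ∃ k, r ≤ k ∧ k < r + N ∧ shift^[k] Iα ∈ U) ∧
      IsMinimalSet shift (orbitClosure Iα) ∧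
      ∀ x ∈ orbitClosure Iα, orbitClosure Iα ⊆ closure {y | ∃ n : ℕ, shift^[n] x = y} := by
  have hadm : Infimax.IsAdmissible α := ⟨hα.1.1 0, hα.1.1 1, hα.2⟩
  have hseq := Infimax.isInfimaxSeq_of_isInfimax hα hI
  have hreturn : ∀ U ∈ 𝓝 Iα, Infimax.HasBoundedGaps {k | shift^[k] Iα ∈ U} :=
    fun _ => hseq.hasBoundedGaps_of_mem_nhds hadm
  have hminimal : IsMinimalSet shift (orbitClosure Iα) :=
    Infimax.isMinimalSet_closure_orbit Infimax.continuous_shift hreturn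
  exact ⟨hreturn, hminimal, hminimal.2.2.2⟩
end
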